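/- Let V = (ℂ⁴)^{⊗n} carry the Segre of n copies of ℙ³. (i) For n = 5, the general linear subspace of V of dimension 1008 which is tangent to the Segre at k general points, with k ≤ 63, is tangent only at those points. (ii) For n > 5 and every positive integer k ≤ (4^n − 4^{n−3})/(3n+1), the general linear subspace of V of dimension 4^n − 4^{n−3} which is tangent to the Segre at k general points is tangent only at those points. -/

import Mathlib

open scoped TensorProduct
open PiTensorProduct

noncomputable section

/-- The space of tensors `V = ℂ^{a₁+1} ⊗ ⋯ ⊗ ℂ^{a_q+1}`. -/
abbrev Ten (q : ℕ) (a : Fin q → ℕ) : Type :=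
  ⨂[ℂ] i : Fin q, (Fin (a i + 1) → ℂ)

/-- Index type for the coordinates on the parameter space `W_k`. -/
abbrev WIdx (q : ℕ) (a : Fin q → ℕ) (k : ℕ) : Type :=
  Fin k × Σ j : Fin q, Fin (a j + 1)

/-- Index type for the standard (decomposable) basis of `Ten q a`. -/
abbrev BIdx (q : ℕ) (a : Fin q → ℕ) : Type := ∀ j : Fin q, Fin (a j + 1)

/-- A tensor is decomposable if it is `v₁ ⊗ ⋯ ⊗ v_q` with all `vᵢ ≠ 0`. -/
def IsDecomposable {q : ℕ} {a : Fin q → ℕ} (t : Ten q a) : Prop :=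
  ∃ v : ∀ j : Fin q, Fin (a j + 1) → ℂ, (∀ j, v j ≠ 0) ∧ t = tprod ℂ v

/-- The affine tangent space at `v₁ ⊗ ⋯ ⊗ v_q` to the cone over the Segre variety:
the span of all tensors obtained by replacing one factor of `v` by an arbitrary vector. -/
def tangent {q : ℕ} (a : Fin q → ℕ) (v : ∀ j : Fin q, Fin (a j + 1) → ℂ) :
    Submodule ℂ (Ten q a) :=
  Submodule.span ℂ
    {x | ∃ (j : Fin q) (u : Fin (a j + 1) → ℂ), x = tprod ℂ (Function.update v j u)}

/-- The map `Φ : W_k → V` sending a `k`-tuple of factor vectors to the sum of the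
corresponding decomposable tensors. -/
def Phi {q : ℕ} (a : Fin q → ℕ) {k : ℕ}
    (p : Fin k → ∀ j : Fin q, Fin (a j + 1) → ℂ) : Ten q a :=
  ∑ i, tprod ℂ (p i)

/-- Evaluation of a polynomial function on `W_k` at a parameter point. -/
def evalW {q : ℕ} {a : Fin q → ℕ} {k : ℕ}
    (F : MvPolynomial (WIdx q a k) ℂ)
    (p : Fin k → ∀ j : Fin q, Fin (a j + 1) → ℂ) : ℂ :=
  MvPolynomial.eval (fun x => p x.1 x.2.1 x.2.2) F

/-- `k`-identifiability of the Segre product `ℙ^{a₁} × ⋯ × ℙ^{a_q}`: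
there is a nonzero polynomial function `F` on `W_k` such that whenever `F(p) ≠ 0`,
the tensor `Φ(p)` has a rank-`k` decomposition, and any two rank-`k` decompositions
of `Φ(p)` agree as multisets of decomposable tensors. -/
def Identifiable (q : ℕ) (a : Fin q → ℕ) (k : ℕ) : Prop :=
  ∃ F : MvPolynomial (WIdx q a k) ℂ,
    (∃ p, evalW F p ≠ 0) ∧
    ∀ p, evalW F p ≠ 0 →
      ((∃ t : Fin k → Ten q a, (∀ i, IsDecomposable (t i)) ∧ ∑ i, t i = Phi a p) ∧
       ∀ s t : Fin k → Ten q a,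
         (∀ i, IsDecomposable (s i)) → (∀ i, IsDecomposable (t i)) →
         ∑ i, s i = Phi a p → ∑ i, t i = Phi a p →
         Finset.univ.val.map s = Finset.univ.val.map t)

/-- The standard decomposable basis vector of `Ten q a` indexed by `f`. -/
def basisVec {q : ℕ} (a : Fin q → ℕ) (f : BIdx q a) : Ten q a :=
  tprod ℂ fun j => Pi.single (f j) 1

/-- The vector of `Ten q a` with coordinates `c` in the standard basis. -/
def fromCoords {q : ℕ} (a : Fin q → ℕ) (c : BIdx q a → ℂ) : Ten q a :=
  ∑ f : BIdx q a, c f • basisVec a f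

/-- Evaluation of a polynomial function on `W_k × V^e` at a parameter point. -/
def evalWV {q : ℕ} {a : Fin q → ℕ} {k e : ℕ}
    (F : MvPolynomial (WIdx q a k ⊕ (Fin e × BIdx q a)) ℂ)
    (p : Fin k → ∀ j : Fin q, Fin (a j + 1) → ℂ)
    (c : Fin e → BIdx q a → ℂ) : ℂ :=
  MvPolynomial.eval (Sum.elim (fun x => p x.1 x.2.1 x.2.2) (fun y => c y.1 y.2)) F

/-- `TangentGeneral q a k d` says: the general linear subspace of `V` of dimension `d`
which is tangent to the Segre at `k` general points is tangent only at those points.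
Concretely, with `e = d - k(1 + Σᵢ aᵢ)`, there is a nonzero polynomial function `F` on
`W_k × V^e` such that whenever `F ≠ 0` at `(p, c)`, the space `L` spanned by the tangent
spaces at the `k` decomposable tensors determined by `p` together with the `e` extra
vectors determined by `c` has dimension exactly `d`, and any decomposable tensor whose
tangent space lies in `L` is a scalar multiple of one of the `k` given ones. -/
def TangentGeneral (q : ℕ) (a : Fin q → ℕ) (k d : ℕ) : Prop :=
  ∃ F : MvPolynomial (WIdx q a k ⊕ (Fin (d - k * (1 + ∑ j, a j)) × BIdx q a)) ℂ,
    (∃ p c, evalWV F p c ≠ 0) ∧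
    ∀ p c, evalWV F p c ≠ 0 →
      (Module.finrank ℂ
          ↥((⨆ i, tangent a (p i)) ⊔
            Submodule.span ℂ (Set.range fun m => fromCoords a (c m))) = d ∧
       ∀ w : ∀ j : Fin q, Fin (a j + 1) → ℂ, (∀ j, w j ≠ 0) →
         tangent a w ≤
           (⨆ i, tangent a (p i)) ⊔
             Submodule.span ℂ (Set.range fun m => fromCoords a (c m)) →
         ∃ (i : Fin k) (t : ℂ), tprod ℂ w = t • tprod ℂ (p i))

/-!
Let `L` be spanned by the tangent spaces `T_i` at `k` points of the Segre variety and by some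
extra tensors, all with algebraically independent coordinates in a field `K`, and suppose that `L`
contains the tangent space `T_w` at another point `w`.

Differentiate an expression of `w` through the spanning vectors of `L` along a derivation of `K`
that moves a single extra tensor. A nonzero coefficient of that tensor would give `L + T_w = V`,
which the dimensions forbid because `L ∩ T_w` contains `w`. The same applies to every tensor in
`T_w`, so `T_w` is contained in the sum `T` of the `T_i`. A derivation that moves only the `i`-th
point then shows that the tangent vectors at this point appearing in `w` lie in the kernel of its
second fundamental form modulo `T`. If that form is nondegenerate, `w` is a combination of the
`k` points themselves. Were two of them involved, moving each would put their tangent spaces in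
the span of the points and `T_w`, which is too small; so `w` is a multiple of one point. A
counterexample over every nonempty Zariski-open set of complex parameters would produce a generic
one over a quotient field of a ring of complex-valued functions.

It remains to exhibit one configuration of points with independent tangent spaces and nondegenerate
second fundamental forms. By symmetry it is enough to check a single form. In five copies of `ℙ³`,
take the point with all coordinates one and the coordinate points of the codewords of the quaternary
Hamming code other than two of them: since the minimum distance is three, the tangent spaces at
the coordinate points involve disjoint sets of coordinates and avoid the words near the two
omitted ones. To add a factor, give each point a coordinate vector in the new factor. The tensors
then split into slices, each containing the tangent spaces for one letter of the new factor and
one further point for every remaining point, and the tangent space at a distinguished point can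
be kept independent of these in every slice.
-/

universe u v

section Derivations

theorem exists_derivation_extending_of_formallyEtale {R S T M : Type*} [CommRing R] [CommRing S]
    [CommRing T] [Algebra R S] [Algebra R T] [Algebra S T] [IsScalarTower R S T]
    [Algebra.FormallyEtale S T] [AddCommGroup M] [Module R M] [Module S M] [Module T M]
    [IsScalarTower R S M] [IsScalarTower R T M] [IsScalarTower S T M] (d : Derivation R S M) :
    ∃ D : Derivation R T M, ∀ s, D (algebraMap S T s) = d s := by
  have hbase := KaehlerDifferential.isBaseChange_of_formallyEtale R S T
  refine ⟨(hbase.lift d.liftKaehlerDifferential).compDer (KaehlerDifferential.D R T), fun s => ?_⟩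
  simpa using hbase.lift_eq d.liftKaehlerDifferential (KaehlerDifferential.D R S s)

variable {k K σ : Type*} [Field k] [Field K] [Algebra k K] [CharZero k] {x : σ → K}

open scoped IntermediateField.algebraAdjoinAdjoin in
theorem formallyEtale_of_isTranscendenceBasis (hx : IsTranscendenceBasis k x) :
    letI := (MvPolynomial.aeval (R := k) x).toAlgebra
    Algebra.FormallyEtale (MvPolynomial σ k) K := by
  let := (MvPolynomial.aeval (R := k) x).toAlgebra
  let A := Algebra.adjoin k (Set.range x)
  let F := IntermediateField.adjoin k (Set.range x)
  let : Algebra (MvPolynomial σ k) A := hx.1.aevalEquiv.toAlgHom.toAlgebra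
  have : IsScalarTower (MvPolynomial σ k) A K := .of_algebraMap_eq fun p => by
    simp [RingHom.algebraMap_toAlgebra, A]
  have : Algebra.FormallyEtale (MvPolynomial σ k) A :=
    .of_equiv (AlgEquiv.ofBijective (Algebra.ofId _ A) hx.1.aevalEquiv.bijective)
  have : Algebra.FormallyEtale A F := .of_isLocalization (nonZeroDivisors A)
  have : Algebra.IsAlgebraic F K := hx.isAlgebraic_field
  have : Algebra.FormallyEtale F K := .of_isSeparable F K
  have : Algebra.FormallyEtale A K := .comp A F K
  exact .comp (MvPolynomial σ k) A K

theorem exists_derivation_apply_eq_of_algebraicIndependent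
    (hx : AlgebraicIndependent k x) (y : σ → K) :
    ∃ D : Derivation k K K, ∀ s, D (x s) = y s := by
  classical
  obtain ⟨T, hxT, hT⟩ := exists_isTranscendenceBasis_superset hx.coe_range
  obtain ⟨y', hy'⟩ : ∃ y' : T → K, ∀ s, y' ⟨x s, hxT ⟨s, rfl⟩⟩ = y s :=
    ⟨fun t => Function.extend x y 0 t, fun s => hx.injective.extend_apply y 0 s⟩
  let := (MvPolynomial.aeval (R := k) ((↑) : T → K)).toAlgebra
  have := formallyEtale_of_isTranscendenceBasis hT
  obtain ⟨D, hD⟩ := exists_derivation_extending_of_formallyEtale (T := K)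
    (MvPolynomial.mkDerivation k y')
  refine ⟨D, fun s => ?_⟩
  simpa [RingHom.algebraMap_toAlgebra, hy'] using hD (MvPolynomial.X ⟨x s, hxT ⟨s, rfl⟩⟩)

end Derivations

theorem linearIndependent_iff_exists_of_mul_eq_one {ι Y K : Type*} [Finite ι] [DecidableEq ι]
    [Fintype Y] [Field K] {v : ι → Y → K} :
    LinearIndependent K v ↔ ∃ N : Matrix Y ι K, Matrix.of v * N = 1 := by
  classical
  cases nonempty_fintype ι
  constructor
  · intro hv
    have hker : LinearMap.ker (Matrix.of v).vecMulLinear = ⊥ :=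
      LinearMap.ker_eq_bot.mpr (Matrix.vecMul_injective_iff.mpr hv)
    obtain ⟨g, hg⟩ := (Matrix.of v).vecMulLinear.exists_leftInverse_of_injective hker
    refine ⟨LinearMap.toMatrixRight' g, Matrix.toLinearMapRight'.injective ?_⟩
    rw [Matrix.toLinearMapRight'_mul, Matrix.toLinearMapRight'_one, ← hg]
    exact congr($(LinearMap.toMatrixRight'.symm_apply_apply g) ∘ₗ _)
  · rintro ⟨N, hN⟩
    refine .of_comp N.vecMulLinear ?_
    have : N.vecMulLinear ∘ v = (1 : Matrix ι ι K).row := congr(Matrix.row $hN)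
    exact this ▸ Matrix.linearIndependent_rows_iff_isUnit.mpr isUnit_one

section HoldsGenerically

variable {σ 𝕜 : Type*} [Field 𝕜]

/-- `P` holds on a nonempty Zariski-open subset of the affine space with coordinates `σ`: off the
zero locus of some nonzero polynomial. -/
def HoldsGenerically (P : (σ → 𝕜) → Prop) : Prop :=
  ∃ F : MvPolynomial σ 𝕜, F ≠ 0 ∧ ∀ x, MvPolynomial.eval x F ≠ 0 → P x

namespace HoldsGenerically

variable {P Q : (σ → 𝕜) → Prop}

theorem mono (hP : HoldsGenerically P) (hPQ : ∀ x, P x → Q x) : HoldsGenerically Q :=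
  let ⟨F, hF, h⟩ := hP
  ⟨F, hF, fun x hx => hPQ x (h x hx)⟩

theorem and (hP : HoldsGenerically P) (hQ : HoldsGenerically Q) :
    HoldsGenerically fun x => P x ∧ Q x := by
  obtain ⟨F, hF, hFP⟩ := hP
  obtain ⟨G, hG, hGQ⟩ := hQ
  refine ⟨F * G, mul_ne_zero hF hG, fun x hx => ?_⟩
  rw [map_mul, mul_ne_zero_iff] at hx
  exact ⟨hFP x hx.1, hGQ x hx.2⟩

theorem forall_of_finite {ι : Type*} [Finite ι] {P : ι → (σ → 𝕜) → Prop}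
    (h : ∀ i, HoldsGenerically (P i)) : HoldsGenerically fun x => ∀ i, P i x := by
  cases nonempty_fintype ι
  choose F hF hFP using h
  refine ⟨∏ i, F i, Finset.prod_ne_zero_iff.mpr fun i _ => hF i, fun x hx i => hFP i x ?_⟩
  rw [map_prod, Finset.prod_ne_zero_iff] at hx
  exact hx i (Finset.mem_univ i)

theorem exists_of_infinite [Infinite 𝕜] (hP : HoldsGenerically P) : ∃ x, P x := by
  obtain ⟨F, hF, h⟩ := hP
  by_contra! hP
  exact hF (MvPolynomial.funext fun x => by simpa using mt (h x) (hP x))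

end HoldsGenerically

theorem holdsGenerically_linearIndependent {ι Y : Type*} [Finite ι] [Finite Y]
    (M : ι → Y → MvPolynomial σ 𝕜) (x₀ : σ → 𝕜)
    (h : LinearIndependent 𝕜 fun i y => MvPolynomial.eval x₀ (M i y)) :
    HoldsGenerically fun x => LinearIndependent 𝕜 fun i y => MvPolynomial.eval x (M i y) := by
  classical
  cases nonempty_fintype ι
  cases nonempty_fintype Y
  let M' : Matrix ι Y (MvPolynomial σ 𝕜) := .of M
  let E (x : σ → 𝕜) : Matrix ι Y 𝕜 := M'.map (MvPolynomial.eval x)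
  obtain ⟨N, hN⟩ : ∃ N : Matrix Y ι 𝕜, E x₀ * N = 1 :=
    linearIndependent_iff_exists_of_mul_eq_one.mp h
  let N' : Matrix Y ι (MvPolynomial σ 𝕜) := N.map MvPolynomial.C
  have hMN (x : σ → 𝕜) : MvPolynomial.eval x (M' * N').det = (E x * N).det := by
    have hN' : N'.map (MvPolynomial.eval x) = N := by ext; simp [N']
    rw [RingHom.map_det, RingHom.mapMatrix_apply, Matrix.map_mul, hN']
  refine ⟨(M' * N').det, fun h0 => ?_, fun x hx => ?_⟩
  · simpa [h0, hN] using hMN x₀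
  · rw [hMN] at hx
    exact .of_comp N.vecMulLinear (Matrix.linearIndependent_rows_of_det_ne_zero hx)

end HoldsGenerically

section GenericPoint

theorem exists_field_algebraicIndependent {σ : Type*} {𝕜 : Type u} {A : Type v} [Field 𝕜]
    [CommRing A] [Algebra 𝕜 A] {x : σ → A} (hx : AlgebraicIndependent 𝕜 x) :
    ∃ (K : Type v) (_ : Field K) (_ : Algebra 𝕜 K) (κ : A →ₐ[𝕜] K),
      AlgebraicIndependent 𝕜 fun s => κ (x s) := by
  let θ : MvPolynomial σ 𝕜 →ₐ[𝕜] A := MvPolynomial.aeval x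
  have hdisj : Disjoint ((⊥ : Ideal A) : Set A) ((nonZeroDivisors (MvPolynomial σ 𝕜)).map θ) := by
    rw [Set.disjoint_left]
    rintro _ h ⟨F, hF, rfl⟩
    exact nonZeroDivisors.ne_zero hF (hx (by simpa using h))
  obtain ⟨I, hI, -, hIdisj⟩ := Ideal.exists_le_prime_disjoint _ _ hdisj
  let K := FractionRing (A ⧸ I)
  let κ : A →ₐ[𝕜] K := (IsScalarTower.toAlgHom 𝕜 (A ⧸ I) K).comp (Ideal.Quotient.mkₐ 𝕜 I)
  refine ⟨K, inferInstance, inferInstance, κ, algebraicIndependent_iff.mpr fun F hF => ?_⟩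
  by_contra hF0
  have hκF : κ (θ F) = 0 := by rwa [MvPolynomial.comp_aeval_apply]
  have hFI : θ F ∈ I := by
    rw [← Ideal.Quotient.eq_zero_iff_mem]
    exact IsFractionRing.injective (A ⧸ I) K (hκF.trans (map_zero _).symm)
  exact Set.disjoint_left.mp hIdisj hFI ⟨F, mem_nonZeroDivisors_of_ne_zero hF0, rfl⟩

theorem exists_generic_counterexample {σ : Type v} {𝕜 : Type u} [Field 𝕜] {P : (σ → 𝕜) → Prop}
    (hP : ¬ HoldsGenerically P) :
    ∃ (K : Type (max v u)) (_ : Field K) (_ : Algebra 𝕜 K) (κ : ({x // ¬ P x} → 𝕜) →ₐ[𝕜] K),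
      AlgebraicIndependent 𝕜 fun s => κ fun x => x.1 s := by
  refine exists_field_algebraicIndependent (algebraicIndependent_iff.mpr fun F hF => ?_)
  by_contra hF0
  refine hP ⟨F, hF0, fun x => not_imp_comm.mp fun hx => ?_⟩
  have hev := congr(Pi.evalAlgHom 𝕜 (fun _ => 𝕜) ⟨x, hx⟩ $hF)
  rwa [MvPolynomial.comp_aeval_apply] at hev

variable {B 𝕜 K ι Y : Type*} [Field 𝕜] [Field K] (κ : (B → 𝕜) →+* K) [Finite ι]

theorem linearIndependent_generic [Finite Y] {v : ι → Y → B → 𝕜}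
    (hv : ∀ b, LinearIndependent 𝕜 fun i y => v i y b) :
    LinearIndependent K fun i y => κ (v i y) := by
  classical
  cases nonempty_fintype ι
  cases nonempty_fintype Y
  choose N hN using fun b => linearIndependent_iff_exists_of_mul_eq_one.mp (hv b)
  let M' : Matrix ι Y (B → 𝕜) := .of v
  let N' : Matrix Y ι (B → 𝕜) := .of fun y i b => N b y i
  have h : M' * N' = 1 := by
    ext i j b
    have := congr($(hN b) i j)
    rw [Matrix.mul_apply] at this ⊢
    simpa [M', N', Matrix.one_apply, apply_ite (fun f : B → 𝕜 => f b)] using this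
  refine linearIndependent_iff_exists_of_mul_eq_one.mpr ⟨N'.map κ, ?_⟩
  have := congr(($h).map κ)
  rwa [Matrix.map_mul, Matrix.map_one κ (map_zero κ) (map_one κ)] at this

theorem mem_span_range_generic {v : ι → Y → B → 𝕜} {h : Y → B → 𝕜}
    (hh : ∀ b, (fun y => h y b) ∈ Submodule.span 𝕜 (Set.range fun i y => v i y b)) :
    (fun y => κ (h y)) ∈ Submodule.span K (Set.range fun i y => κ (v i y)) := by
  cases nonempty_fintype ι
  simp only [Submodule.mem_span_range_iff_exists_fun] at hh ⊢
  choose g hg using hh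
  refine ⟨fun i => κ fun b => g b i, funext fun y => ?_⟩
  have : h y = ∑ i, (fun b => g b i) * v i y := by
    ext b
    simpa using congr($(hg b) y).symm
  simp [this]

end GenericPoint

/-! ### The Segre map and its derivatives -/

section Segre

variable {q : ℕ} {a : Fin q → ℕ} {R S K ι : Type*}

/-- A tuple of vectors, one in each factor `R^{a j + 1}`, representing a point of the Segre cone. -/
abbrev FactorTuple (a : Fin q → ℕ) (R : Type*) : Type _ := ∀ j, Fin (a j + 1) → R

/-- The indices of `a j` directions in each factor `j`: together they count the dimension of the
Segre variety. -/
abbrev DirectionIdx (a : Fin q → ℕ) : Type := Σ j, Fin (a j)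

/-- A choice of `a j` vectors in each factor `R^{a j + 1}`, complementing a point of the Segre cone
to a basis of that factor when they are in general position. -/
abbrev FactorDirections (a : Fin q → ℕ) (R : Type*) : Type _ :=
  ∀ j, Fin (a j) → Fin (a j + 1) → R

section CommRing

variable [CommRing R] [CommRing S]

/-- The Segre map, sending a tuple of vectors to the coordinates of their tensor product in the
standard basis. -/
def segre (a : Fin q → ℕ) (R : Type*) [CommRing R] :
    MultilinearMap R (fun j : Fin q => Fin (a j + 1) → R) (BIdx q a → R) :=
  MultilinearMap.pi fun f =>
    (MultilinearMap.mkPiAlgebra R (Fin q) R).compLinearMap fun j => LinearMap.proj (f j)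

@[simp]
theorem segre_apply (v : FactorTuple a R) (f : BIdx q a) : segre a R v f = ∏ j, v j (f j) := by
  simp [segre]

/-- The affine tangent space to the Segre cone, in coordinates: the span of all tensors obtained
from `v` by replacing one factor. -/
def segreTangentSpace (v : FactorTuple a R) : Submodule R (BIdx q a → R) :=
  ⨆ j, LinearMap.range ((segre a R).toLinearMap v j)

/-- A point of the Segre cone followed by its derivatives in the directions `u`. -/
def segreTangent (p : FactorTuple a R) (u : FactorDirections a R) :
    Option (DirectionIdx a) → BIdx q a → R
  | none => segre a R p
  | some b => segre a R (Function.update p b.1 (u b.1 b.2))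

/-- The second derivatives of the Segre map at `p` in the directions `u`. -/
def segreSecond (p : FactorTuple a R) (u : FactorDirections a R) (b c : DirectionIdx a) :
    BIdx q a → R :=
  if b.1 = c.1 then 0
  else segre a R (Function.update (Function.update p b.1 (u b.1 b.2)) c.1 (u c.1 c.2))

/-- The tangent vectors `segreTangent` of a family of points of the Segre cone. -/
def tangentFamily (p : ι → FactorTuple a R) (u : ι → FactorDirections a R)
    (x : ι × Option (DirectionIdx a)) : BIdx q a → R :=
  segreTangent (p x.1) (u x.1) x.2

theorem segre_update_mem_segreTangentSpace (v : FactorTuple a R) (j : Fin q)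
    (z : Fin (a j + 1) → R) : segre a R (Function.update v j z) ∈ segreTangentSpace v :=
  Submodule.mem_iSup_of_mem j ⟨z, rfl⟩

theorem segre_mem_segreTangentSpace [Nonempty (Fin q)] (v : FactorTuple a R) :
    segre a R v ∈ segreTangentSpace v := by
  obtain ⟨j⟩ := ‹Nonempty (Fin q)›
  simpa using segre_update_mem_segreTangentSpace v j (v j)

theorem segreTangentSpace_le_iff {v : FactorTuple a R} {L : Submodule R (BIdx q a → R)} :
    segreTangentSpace v ≤ L ↔ ∀ j z, segre a R (Function.update v j z) ∈ L := by
  simp [segreTangentSpace, iSup_le_iff, LinearMap.range_le_iff_comap, Submodule.eq_top_iff']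

theorem segre_map (φ : R →+* S) (v : FactorTuple a R) :
    segre a S (fun j m => φ (v j m)) = fun f => φ (segre a R v f) := by
  ext f
  simp

theorem update_map (φ : R →+* S) (v : FactorTuple a R) (j : Fin q) (z : Fin (a j + 1) → R) :
    (Function.update (fun j m => φ (v j m)) j fun m => φ (z m)) =
      fun i m => φ (Function.update v j z i m) :=
  funext fun i =>
    (Function.apply_update (fun i (w : Fin (a i + 1) → R) m => φ (w m)) v j z i).symm

theorem segreTangent_map (φ : R →+* S) (p : FactorTuple a R) (u : FactorDirections a R)
    (o : Option (DirectionIdx a)) :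
    segreTangent (fun j m => φ (p j m)) (fun j l m => φ (u j l m)) o =
      fun f => φ (segreTangent p u o f) := by
  cases o with
  | none => exact segre_map φ p
  | some b => simp only [segreTangent, update_map, segre_map]

theorem segreSecond_map (φ : R →+* S) (p : FactorTuple a R) (u : FactorDirections a R)
    (b c : DirectionIdx a) :
    segreSecond (fun j m => φ (p j m)) (fun j l m => φ (u j l m)) b c =
      fun f => φ (segreSecond p u b c f) := by
  unfold segreSecond
  split_ifs
  · exact funext fun _ => (map_zero φ).symm
  · simp only [update_map, segre_map]

theorem tangentFamily_map (φ : R →+* S) (p : ι → FactorTuple a R) (u : ι → FactorDirections a R)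
    (x : ι × Option (DirectionIdx a)) :
    tangentFamily (fun i j m => φ (p i j m)) (fun i j l m => φ (u i j l m)) x =
      fun f => φ (tangentFamily p u x f) :=
  segreTangent_map φ (p x.1) (u x.1) x.2

end CommRing

end Segre

/-! ### Nondegenerate configurations -/

section HessianFamily

variable {α X Y R S K : Type*} [DecidableEq α]

/-- A family of vectors whose linear independence says that `v` is independent and that the
bilinear form `s` is nondegenerate modulo the span of `v`
(see `linearIndependent_hessianFamily_iff`). -/
def hessianFamily [Zero R] (s : α → α → Y → R) (v : X → Y → R) : α ⊕ (α × X) → α × Y → R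
  | .inl b, y => s b y.1 y.2
  | .inr x, y => if y.1 = x.1 then v x.2 y.2 else 0

theorem hessianFamily_map [CommRing R] [CommRing S] (φ : R →+* S) (s : α → α → Y → R)
    (v : X → Y → R) :
    hessianFamily (fun b c y => φ (s b c y)) (fun x y => φ (v x y)) =
      fun i y => φ (hessianFamily s v i y) := by
  ext (b | x) y
  · rfl
  · simp only [hessianFamily, apply_ite φ, map_zero]

variable [Fintype α] [Field K] {s : α → α → Y → K} {v : X → Y → K}

theorem sum_smul_hessianFamily_eq_zero_iff [Fintype X] (g : α ⊕ (α × X) → K) :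
    ∑ i, g i • hessianFamily s v i = 0 ↔
      ∀ c, ∑ b, g (.inl b) • s b c + ∑ x, g (.inr (c, x)) • v x = 0 := by
  simp [funext_iff, Fintype.sum_sum_type, Fintype.sum_prod_type, hessianFamily]

theorem linearIndependent_hessianFamily_iff [Nonempty α] [Finite X] :
    LinearIndependent K (hessianFamily s v) ↔ LinearIndependent K v ∧
      ∀ t : α → K, (∀ c, ∑ b, t b • s b c ∈ Submodule.span K (Set.range v)) → t = 0 := by
  cases nonempty_fintype X
  simp only [Fintype.linearIndependent_iff, sum_smul_hessianFamily_eq_zero_iff,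
    Submodule.mem_span_range_iff_exists_fun]
  constructor
  · refine fun h => ⟨fun g hg x => ?_, fun t ht => funext fun b => ?_⟩
    · obtain ⟨c⟩ := ‹Nonempty α›
      exact h (Sum.elim 0 fun z => g z.2) (by simpa using hg) (.inr (c, x))
    · choose g hg using ht
      exact h (Sum.elim t fun z => -g z.1 z.2) (fun c => by simp [hg c]) (.inl b)
  · rintro ⟨hv, hs⟩ g hg
    have hinl : (fun b => g (.inl b)) = 0 := hs _ fun c => ⟨fun x => -g (.inr (c, x)), by
      simpa using (eq_neg_of_add_eq_zero_left (hg c)).symm⟩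
    rintro (b | ⟨c, x⟩)
    · exact congr_fun hinl b
    · exact hv (fun x => g (.inr (c, x))) (by simpa [funext_iff.mp hinl] using hg c) x

end HessianFamily

section GenericParameters

variable {q : ℕ} {ι : Type*}

/-- The coordinates of a family of points of the Segre cone and of directions at these points. -/
abbrev ParameterIdx (ι : Type*) (a : Fin q → ℕ) : Type _ :=
  (ι × Σ j, Fin (a j + 1)) ⊕ (ι × Σ b : DirectionIdx a, Fin (a b.1 + 1))

/-- The family of points of the Segre cone whose coordinates are indeterminates. -/
def genericFactorTuple (𝕜 : Type*) [CommRing 𝕜] (a : Fin q → ℕ) (i : ι) :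
    FactorTuple a (MvPolynomial (ParameterIdx ι a) 𝕜) :=
  fun j m => .X (.inl (i, ⟨j, m⟩))

/-- The directions at the points `genericFactorTuple 𝕜 a` whose coordinates are indeterminates. -/
def genericFactorDirections (𝕜 : Type*) [CommRing 𝕜] (a : Fin q → ℕ) (i : ι) :
    FactorDirections a (MvPolynomial (ParameterIdx ι a) 𝕜) :=
  fun j l m => .X (.inr (i, ⟨⟨j, l⟩, m⟩))

variable {𝕜 : Type*} [CommRing 𝕜] {a : Fin q → ℕ}

/-- The values of the indeterminates which specialize the generic points and directions to `p` and
`u`. -/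
def parameterPoint (p : ι → FactorTuple a 𝕜) (u : ι → FactorDirections a 𝕜) :
    ParameterIdx ι a → 𝕜
  | .inl x => p x.1 x.2.1 x.2.2
  | .inr x => u x.1 x.2.1.1 x.2.1.2 x.2.2

variable (p : ι → FactorTuple a 𝕜) (u : ι → FactorDirections a 𝕜) (i : ι) (j : Fin q)

theorem eval_genericFactorTuple (m : Fin (a j + 1)) :
    MvPolynomial.eval (parameterPoint p u) (genericFactorTuple 𝕜 a i j m) = p i j m := by
  simp [genericFactorTuple, parameterPoint]

theorem eval_genericFactorDirections (l : Fin (a j)) (m : Fin (a j + 1)) :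
    MvPolynomial.eval (parameterPoint p u) (genericFactorDirections 𝕜 a i j l m) = u i j l m := by
  simp [genericFactorDirections, parameterPoint]

end GenericParameters

section Nondegenerate

variable {q : ℕ} {a : Fin q → ℕ} {𝕜 K ι κ σ : Type*} [Field 𝕜] [Field K]

/-- The tangent vectors in the directions `u` to the Segre cone at the points `p` are linearly
independent, and the second fundamental form at `p i₀`, modulo all these tangent vectors, is
nondegenerate. -/
structure IsNondegenerateAt (p : ι → FactorTuple a K) (u : ι → FactorDirections a K) (i₀ : ι) :
    Prop where
  linearIndependent : LinearIndependent K (tangentFamily p u)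
  eq_zero : ∀ t : DirectionIdx a → K,
    (∀ c, ∑ b, t b • segreSecond (p i₀) (u i₀) b c ∈
      Submodule.span K (Set.range (tangentFamily p u))) → t = 0

theorem isNondegenerateAt_iff [Nonempty (DirectionIdx a)] [Finite ι] {p : ι → FactorTuple a K}
    {u : ι → FactorDirections a K} {i₀ : ι} :
    IsNondegenerateAt p u i₀ ↔ LinearIndependent K
      (hessianFamily (segreSecond (p i₀) (u i₀)) (tangentFamily p u)) := by
  rw [linearIndependent_hessianFamily_iff]
  exact ⟨fun h => ⟨h.1, h.2⟩, fun h => ⟨h.1, h.2⟩⟩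

theorem hessianFamily_segreSecond_map {R S : Type*} [CommRing R] [CommRing S] (φ : R →+* S)
    (p : ι → FactorTuple a R) (u : ι → FactorDirections a R) (i₀ : ι) :
    hessianFamily (segreSecond (fun j m => φ (p i₀ j m)) (fun j l m => φ (u i₀ j l m)))
        (tangentFamily (fun i j m => φ (p i j m)) (fun i j l m => φ (u i j l m))) =
      fun x y => φ (hessianFamily (segreSecond (p i₀) (u i₀)) (tangentFamily p u) x y) := by
  rw [← hessianFamily_map]
  congr 1
  · exact funext₂ fun b c => segreSecond_map φ (p i₀) (u i₀) b c
  · exact funext fun x => tangentFamily_map φ p u x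

theorem IsNondegenerateAt.comp {p : ι → FactorTuple a K} {u : ι → FactorDirections a K}
    {e : κ → ι} {k₀ : κ} (h : IsNondegenerateAt p u (e k₀)) (he : Function.Injective e) :
    IsNondegenerateAt (p ∘ e) (u ∘ e) k₀ where
  linearIndependent := h.linearIndependent.comp (Prod.map e id) (he.prodMap Function.injective_id)
  eq_zero t ht := h.eq_zero t fun c =>
    Submodule.span_mono (Set.range_comp_subset_range (Prod.map e id) (tangentFamily p u)) (ht c)

/-- There are `k` points of the Segre cone, with chosen directions, which are nondegenerate in the
sense of `IsNondegenerateAt` at each of the points. -/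
def HasNondegenerateConfiguration (𝕜 : Type*) [Field 𝕜] (a : Fin q → ℕ) (k : ℕ) : Prop :=
  ∃ (p : Fin k → FactorTuple a 𝕜) (u : Fin k → FactorDirections a 𝕜),
    ∀ i, IsNondegenerateAt p u i

theorem HasNondegenerateConfiguration.mono {k l : ℕ}
    (h : HasNondegenerateConfiguration 𝕜 a l) (hkl : k ≤ l) :
    HasNondegenerateConfiguration 𝕜 a k := by
  obtain ⟨p, u, h⟩ := h
  exact ⟨_, _, fun i => (h (Fin.castLE hkl i)).comp (Fin.castLE_injective hkl)⟩

variable [Nonempty (DirectionIdx a)] [Finite ι]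

theorem IsNondegenerateAt.generic {B : Type*} (φ : (B → 𝕜) →+* K)
    {p : ι → FactorTuple a (B → 𝕜)} {u : ι → FactorDirections a (B → 𝕜)} {i₀ : ι}
    (h : ∀ b, IsNondegenerateAt (fun i j m => p i j m b) (fun i j l m => u i j l m b) i₀) :
    IsNondegenerateAt (fun i j m => φ (p i j m)) (fun i j l m => φ (u i j l m)) i₀ := by
  rw [isNondegenerateAt_iff, hessianFamily_segreSecond_map φ p u]
  refine linearIndependent_generic φ fun b => ?_
  have hb := isNondegenerateAt_iff.mp (h b)
  exact (hessianFamily_segreSecond_map (Pi.evalRingHom (fun _ => 𝕜) b) p u i₀) ▸ hb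

theorem IsNondegenerateAt.holdsGenerically {p : ι → FactorTuple a (MvPolynomial σ 𝕜)}
    {u : ι → FactorDirections a (MvPolynomial σ 𝕜)} {i₀ : ι} {x₀ : σ → 𝕜}
    (h : IsNondegenerateAt (fun i j m => MvPolynomial.eval x₀ (p i j m))
      (fun i j l m => MvPolynomial.eval x₀ (u i j l m)) i₀) :
    HoldsGenerically fun x => IsNondegenerateAt (fun i j m => MvPolynomial.eval x (p i j m))
      (fun i j l m => MvPolynomial.eval x (u i j l m)) i₀ := by
  simp only [isNondegenerateAt_iff, hessianFamily_segreSecond_map] at h ⊢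
  exact holdsGenerically_linearIndependent _ x₀ h

theorem exists_forall_isNondegenerateAt [Infinite 𝕜]
    (h : ∀ i₀ : ι, ∃ (p : ι → FactorTuple a 𝕜) (u : ι → FactorDirections a 𝕜),
      IsNondegenerateAt p u i₀) :
    ∃ (p : ι → FactorTuple a 𝕜) (u : ι → FactorDirections a 𝕜), ∀ i, IsNondegenerateAt p u i := by
  have hgen : HoldsGenerically fun x : ParameterIdx ι a → 𝕜 => ∀ i₀,
      IsNondegenerateAt (fun i j m => MvPolynomial.eval x (genericFactorTuple 𝕜 a i j m))
        (fun i j l m => MvPolynomial.eval x (genericFactorDirections 𝕜 a i j l m)) i₀ :=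
    .forall_of_finite fun i₀ => by
      obtain ⟨p, u, hpu⟩ := h i₀
      refine IsNondegenerateAt.holdsGenerically (x₀ := parameterPoint p u) ?_
      simpa only [eval_genericFactorTuple, eval_genericFactorDirections] using hpu
  obtain ⟨x, hx⟩ := hgen.exists_of_infinite
  exact ⟨_, _, hx⟩

theorem hasNondegenerateConfiguration_of_isNondegenerateAt [Infinite 𝕜] {k : ℕ}
    {p : ι → FactorTuple a 𝕜} {u : ι → FactorDirections a 𝕜} {i₀ : ι}
    (h : IsNondegenerateAt p u i₀) (hk : k ≤ Nat.card ι) : HasNondegenerateConfiguration 𝕜 a k := by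
  classical
  refine exists_forall_isNondegenerateAt fun i => ?_
  let e : Fin k → ι := fun i => (Finite.equivFin ι).symm (Fin.castLE hk i)
  have he : Function.Injective e := (Equiv.injective _).comp (Fin.castLE_injective hk)
  let e' := Equiv.swap (e i) i₀ ∘ e
  have he' : Function.Injective e' := (Equiv.injective _).comp he
  have hi : e' i = i₀ := Equiv.swap_apply_left _ _
  exact ⟨p ∘ e', u ∘ e', IsNondegenerateAt.comp (hi ▸ h) he'⟩

end Nondegenerate

/-! ### Configurations from codes of minimum distance three -/

section Code

variable {q : ℕ} {a : Fin q → ℕ} {K ι : Type*}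

/-- The words at Hamming distance at most one from `c`, indexed so that the neighbors of `c`
correspond to the coordinate directions at the coordinate point `c` of the Segre variety. -/
def neighbor (c : BIdx q a) : Option (DirectionIdx a) → BIdx q a
  | none => c
  | some b => Function.update c b.1 ((c b.1).succAbove b.2)

theorem hammingDist_update_le_one {ι : Type*} {β : ι → Type*} [Fintype ι] [DecidableEq ι]
    [∀ i, DecidableEq (β i)] (c : ∀ i, β i) (j : ι) (x : β j) :
    hammingDist (Function.update c j x) c ≤ 1 := by
  rw [hammingDist, ← Finset.card_singleton j]
  refine Finset.card_le_card fun i hi => ?_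
  by_contra h
  simp_all

theorem hammingDist_neighbor_le_one (c : BIdx q a) (o : Option (DirectionIdx a)) :
    hammingDist (neighbor c o) c ≤ 1 := by
  cases o with
  | none => simp [neighbor]
  | some b => exact hammingDist_update_le_one _ _ _

theorem neighbor_ne_of_hammingDist_le_one {c d f : BIdx q a} (h : 3 ≤ hammingDist c d)
    (hf : hammingDist f d ≤ 1) (o : Option (DirectionIdx a)) : neighbor c o ≠ f := by
  rintro rfl
  have hc := hammingDist_neighbor_le_one c o
  have htriangle := hammingDist_triangle_left c d (neighbor c o)
  omega

theorem neighbor_injective (c : BIdx q a) : Function.Injective (neighbor c) := by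
  have hne (b : DirectionIdx a) : neighbor c (some b) ≠ c := fun h =>
    Fin.succAbove_ne (c b.1) b.2 (by simpa [neighbor] using congr_fun h b.1)
  rintro (_ | ⟨j, l⟩) (_ | ⟨j', l'⟩) h
  · rfl
  · exact (hne _ h.symm).elim
  · exact (hne _ h).elim
  · have hj := congr_fun h j
    obtain rfl | hjj := eq_or_ne j j'
    · simpa [neighbor] using hj
    · simp [neighbor, hjj, Fin.succAbove_ne] at hj

theorem neighbor_eq_neighbor_iff {c : ι → BIdx q a}
    (hc : Pairwise fun i j => 3 ≤ hammingDist (c i) (c j)) {i j : ι}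
    {o o' : Option (DirectionIdx a)} :
    neighbor (c i) o = neighbor (c j) o' ↔ i = j ∧ o = o' := by
  refine ⟨fun h => ?_, by rintro ⟨rfl, rfl⟩; rfl⟩
  obtain rfl | hij := eq_or_ne i j
  · exact ⟨rfl, neighbor_injective _ h⟩
  · exact (neighbor_ne_of_hammingDist_le_one (hc hij) (hammingDist_neighbor_le_one _ _) _ h).elim

theorem eq_zero_of_sum_eq_of_hammingDist_le_one [Field K] [CharZero K]
    {τ : ∀ j, Fin (a j + 1) → K} (hτ : ∀ j, τ j 0 = 0) {w : BIdx q a} (hw : 2 ≤ hammingNorm w)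
    (h : ∀ f, hammingDist f w ≤ 1 → ∀ j, f j ≠ 0 → ∑ i, τ i (f i) = τ j (f j)) : τ = 0 := by
  have hsupp : ∑ i, τ i (w i) = hammingNorm w • ∑ i, τ i (w i) := by
    conv_lhs => rw [← Finset.sum_filter_of_ne (p := fun i => w i ≠ 0) fun i _ hi h0 =>
      hi (h0 ▸ hτ i)]
    exact Finset.sum_eq_card_nsmul fun j hj => (h w (by simp) j (Finset.mem_filter.mp hj).2).symm
  have hsum : ∑ i, τ i (w i) = 0 := by
    have hn : (hammingNorm w : K) - 1 ≠ 0 := sub_ne_zero.mpr (by exact_mod_cast (by omega))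
    refine (mul_eq_zero.mp ?_).resolve_left hn
    rw [sub_mul, one_mul, ← nsmul_eq_mul, ← hsupp, sub_self]
  have hτw (j) : τ j (w j) = 0 := by
    by_cases hj : w j = 0
    · rw [hj, hτ]
    · rw [← h w (by simp) j hj, hsum]
  ext j m
  obtain ⟨b, hb, hbj⟩ := Finset.exists_mem_ne (Nat.lt_of_succ_le hw) j
  have hb0 : w b ≠ 0 := (Finset.mem_filter.mp hb).2
  have hsum' := h (Function.update w j m) (hammingDist_update_le_one w j m) b (by simpa [hbj])
  rw [Fintype.sum_eq_single j fun i hi => by simp [hi, hτw]] at hsum'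
  simpa [hbj, hτw] using hsum'

section CommRing

variable [CommRing K]

theorem segre_single (c : BIdx q a) :
    segre a K (fun j => Pi.single (c j) 1) = Pi.single c 1 := by
  ext f
  simp only [segre_apply, Pi.single_apply, Finset.prod_ite_zero, Finset.prod_const_one,
    Finset.mem_univ, true_imp_iff, funext_iff]

theorem segreTangent_single (c : BIdx q a) (o : Option (DirectionIdx a)) :
    segreTangent (a := a) (fun j => Pi.single (c j) (1 : K))
        (fun j l => Pi.single ((c j).succAbove l) 1) o = Pi.single (neighbor c o) 1 := by
  cases o with
  | none => exact segre_single c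
  | some b =>
    rw [neighbor, ← segre_single, segreTangent]
    congr 1
    ext j m
    obtain rfl | hj := eq_or_ne j b.1 <;> simp [*]

/-- The coordinate directions at a point of the Segre cone having nonzero zeroth coordinates. -/
def coordinateDirections (a : Fin q → ℕ) (K : Type*) [CommRing K] : FactorDirections a K :=
  fun _ l => Pi.single l.succ 1

theorem segreTangent_one_none (f : BIdx q a) :
    segreTangent 1 (coordinateDirections a K) none f = 1 := by
  simp [segreTangent]

theorem segreTangent_one_some (b : DirectionIdx a) (f : BIdx q a) :
    segreTangent 1 (coordinateDirections a K) (some b) f = if f b.1 = b.2.succ then 1 else 0 := by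
  simp only [segreTangent, segre_apply]
  rw [Fintype.prod_eq_single b.1 fun j hj => by simp [hj]]
  simp [coordinateDirections, Pi.single_apply]

theorem segreSecond_one (b c : DirectionIdx a) (f : BIdx q a) :
    segreSecond 1 (coordinateDirections a K) b c f =
      if b.1 ≠ c.1 ∧ f b.1 = b.2.succ ∧ f c.1 = c.2.succ then 1 else 0 := by
  unfold segreSecond
  by_cases h : b.1 = c.1
  · simp [h]
  · rw [if_neg h, segre_apply, Fintype.prod_eq_mul b.1 c.1 h fun j hj => by simp [hj.1, hj.2]]
    by_cases hb : f b.1 = b.2.succ <;> by_cases hc : f c.1 = c.2.succ <;>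
      simp [h, hb, hc, coordinateDirections]

/-- The general point with all coordinates one, followed by the coordinate points of the Segre
variety corresponding to the words `c`. -/
def codePoint (c : ι → BIdx q a) (K : Type*) [CommRing K] : Option ι → FactorTuple a K
  | none => 1
  | some i => fun j => Pi.single (c i j) 1

/-- The coordinate directions at the points `codePoint c K`. -/
def codeDirections (c : ι → BIdx q a) (K : Type*) [CommRing K] : Option ι → FactorDirections a K
  | none => coordinateDirections a K
  | some i => fun j l => Pi.single ((c i j).succAbove l) 1

theorem sum_smul_segreTangent_one (g : Option (DirectionIdx a) → K) (f : BIdx q a) :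
    (∑ o, g o • segreTangent 1 (coordinateDirections a K) o) f =
      g none + ∑ b : DirectionIdx a, if f b.1 = b.2.succ then g (some b) else 0 := by
  simp [Fintype.sum_option, segreTangent_one_none, segreTangent_one_some]

theorem eq_zero_of_sum_smul_segreTangent_one {g : Option (DirectionIdx a) → K}
    (h : ∀ f, hammingDist f 0 ≤ 1 →
      (∑ o, g o • segreTangent 1 (coordinateDirections a K) o) f = 0) : g = 0 := by
  simp only [sum_smul_segreTangent_one] at h
  have hnone : g none = 0 := by
    simpa [(Fin.succ_ne_zero _).symm] using h 0 (by simp)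
  ext (_ | b)
  · exact hnone
  · have hb := h (Function.update 0 b.1 b.2.succ) (hammingDist_update_le_one 0 b.1 _)
    rw [hnone, zero_add, Finset.sum_eq_single b] at hb
    · simpa using hb
    · rintro ⟨j, l⟩ - hjl
      refine if_neg fun hl => hjl ?_
      obtain rfl | hj := eq_or_ne j b.1
      · exact Sigma.ext rfl (heq_of_eq (by simpa [eq_comm] using hl))
      · simp [hj, (Fin.succ_ne_zero _).symm] at hl
    · simp

variable [Fintype ι] {c : ι → BIdx q a} (g : Option ι × Option (DirectionIdx a) → K)

theorem sum_smul_tangentFamily_code (f : BIdx q a) :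
    (∑ x, g x • tangentFamily (codePoint c K) (codeDirections c K) x) f =
      (∑ o, g (none, o) • segreTangent 1 (coordinateDirections a K) o) f +
        ∑ i, ∑ o, if neighbor (c i) o = f then g (some i, o) else 0 := by
  have hsome (i o) : tangentFamily (codePoint c K) (codeDirections c K) (some i, o) =
      Pi.single (neighbor (c i) o) 1 := segreTangent_single (c i) o
  have hnone (o) : tangentFamily (codePoint c K) (codeDirections c K) (none, o) =
      segreTangent 1 (coordinateDirections a K) o := rfl
  simp only [Fintype.sum_prod_type, Fintype.sum_option (α := ι), hsome, hnone, Pi.add_apply]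
  simp [Pi.single_apply, eq_comm]

theorem sum_smul_tangentFamily_code_of_ne {f : BIdx q a} (hf : ∀ i o, neighbor (c i) o ≠ f) :
    (∑ x, g x • tangentFamily (codePoint c K) (codeDirections c K) x) f =
      (∑ o, g (none, o) • segreTangent 1 (coordinateDirections a K) o) f := by
  simp only [sum_smul_tangentFamily_code, hf, if_false, Finset.sum_const_zero, add_zero]

theorem sum_smul_tangentFamily_code_neighbor
    (hc : Pairwise fun i j => 3 ≤ hammingDist (c i) (c j)) (i : ι) (o : Option (DirectionIdx a)) :
    (∑ x, g x • tangentFamily (codePoint c K) (codeDirections c K) x) (neighbor (c i) o) =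
      (∑ o, g (none, o) • segreTangent 1 (coordinateDirections a K) o) (neighbor (c i) o) +
        g (some i, o) := by
  classical
  rw [sum_smul_tangentFamily_code]
  simp [neighbor_eq_neighbor_iff hc, ite_and]

theorem eq_zero_of_sum_smul_tangentFamily_code (hc₀ : ∀ i, 3 ≤ hammingDist (c i) 0)
    (h : ∀ f, hammingDist f 0 ≤ 1 →
      (∑ x, g x • tangentFamily (codePoint c K) (codeDirections c K) x) f = 0) :
    (fun o => g (none, o)) = 0 :=
  eq_zero_of_sum_smul_segreTangent_one fun f hf => by
    rw [← sum_smul_tangentFamily_code_of_ne g fun i o =>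
      neighbor_ne_of_hammingDist_le_one (hc₀ i) hf o, h f hf]

end CommRing

section Field

variable [Field K] [Finite ι] {c : ι → BIdx q a}

theorem linearIndependent_tangentFamily_code
    (hc : Pairwise fun i j => 3 ≤ hammingDist (c i) (c j)) (hc₀ : ∀ i, 3 ≤ hammingDist (c i) 0) :
    LinearIndependent K (tangentFamily (codePoint c K) (codeDirections c K)) := by
  cases nonempty_fintype ι
  rw [Fintype.linearIndependent_iff]
  intro g hg
  have hnone := eq_zero_of_sum_smul_tangentFamily_code g hc₀ fun f _ => congr_fun hg f
  rintro ⟨_ | i, o⟩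
  · exact congr_fun hnone o
  · have hsome := sum_smul_tangentFamily_code_neighbor g hc i o
    rw [hg] at hsome
    simpa [funext_iff.mp hnone] using hsome.symm

theorem apply_eq_zero_of_mem_span_tangentFamily_code (hc₀ : ∀ i, 3 ≤ hammingDist (c i) 0)
    {F : BIdx q a → K}
    (hF : F ∈ Submodule.span K (Set.range (tangentFamily (codePoint c K) (codeDirections c K))))
    (h : ∀ f, hammingDist f 0 ≤ 1 → F f = 0) {f : BIdx q a} (hf : ∀ i o, neighbor (c i) o ≠ f) :
    F f = 0 := by
  cases nonempty_fintype ι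
  obtain ⟨g, rfl⟩ := (Submodule.mem_span_range_iff_exists_fun K).mp hF
  rw [sum_smul_tangentFamily_code_of_ne g hf]
  simp [funext_iff.mp (eq_zero_of_sum_smul_tangentFamily_code g hc₀ h)]

/-- The function of the letters of a word which extends `t` by zero at the letters zero. -/
def letterFunction (t : DirectionIdx a → K) (j : Fin q) : Fin (a j + 1) → K :=
  Fin.cases 0 fun l => t ⟨j, l⟩

theorem sum_smul_segreSecond_one (t : DirectionIdx a → K) (c : DirectionIdx a) (f : BIdx q a)
    (hf : f c.1 = c.2.succ) :
    (∑ b, t b • segreSecond 1 (coordinateDirections a K) b c) f =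
      ∑ j ∈ Finset.univ.erase c.1, letterFunction t j (f j) := by
  have hletter (j : Fin q) (x : Fin (a j + 1)) :
      (∑ l : Fin (a j), if x = l.succ then t ⟨j, l⟩ else 0) = letterFunction t j x := by
    cases x using Fin.cases <;> simp [letterFunction, (Fin.succ_ne_zero _).symm]
  simp only [Finset.sum_apply, Pi.smul_apply, segreSecond_one, hf, and_true, smul_eq_mul, mul_ite,
    mul_one, mul_zero, ite_and, Fintype.sum_sigma, ← hletter]
  rw [← Finset.sum_subset (Finset.subset_univ (Finset.univ.erase c.1))]
  · exact Finset.sum_congr rfl fun j hj => by simp [Finset.ne_of_mem_erase hj]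
  · simp

theorem sum_smul_segreSecond_one_eq_zero (t : DirectionIdx a → K) (c : DirectionIdx a)
    {f : BIdx q a} (hf : hammingDist f 0 ≤ 1) :
    (∑ b, t b • segreSecond 1 (coordinateDirections a K) b c) f = 0 := by
  by_cases hfc : f c.1 = c.2.succ
  · rw [sum_smul_segreSecond_one t c f hfc]
    refine Finset.sum_eq_zero fun j hj => ?_
    suffices hfj : f j = 0 by rw [hfj]; rfl
    by_contra hfj
    rw [hammingDist_zero_right, hammingNorm, Finset.card_le_one] at hf
    exact Finset.ne_of_mem_erase hj (hf j (by simpa) c.1 (by simp [hfc]))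
  · simp [segreSecond_one, hfc]

theorem isNondegenerateAt_code [CharZero K]
    (hc : Pairwise fun i j => 3 ≤ hammingDist (c i) (c j)) (hc₀ : ∀ i, 3 ≤ hammingDist (c i) 0)
    {w : BIdx q a} (hcw : ∀ i, 3 ≤ hammingDist (c i) w) (hw : 2 ≤ hammingNorm w) :
    IsNondegenerateAt (codePoint c K) (codeDirections c K) none where
  linearIndependent := linearIndependent_tangentFamily_code hc hc₀
  eq_zero t ht := by
    suffices hτ : letterFunction t = 0 from funext fun ⟨j, l⟩ => congr_fun₂ hτ j l.succ
    refine eq_zero_of_sum_eq_of_hammingDist_le_one (fun _ => rfl) hw fun f hf j hj => ?_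
    obtain ⟨l, hl⟩ := Fin.exists_succ_eq.mpr hj
    have hvanish := apply_eq_zero_of_mem_span_tangentFamily_code hc₀ (ht ⟨j, l⟩)
      (fun f hf => sum_smul_segreSecond_one_eq_zero t ⟨j, l⟩ hf)
      fun i o => neighbor_ne_of_hammingDist_le_one (hcw i) hf o
    rw [← Finset.add_sum_erase _ _ (Finset.mem_univ j), add_eq_left]
    exact (sum_smul_segreSecond_one t ⟨j, l⟩ f hl.symm).symm.trans hvanish

end Field

theorem hasNondegenerateConfiguration_of_code [Field K] [CharZero K] [Finite ι] [Nontrivial ι]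
    {c : ι → BIdx q a} (hc : Pairwise fun i j => 3 ≤ hammingDist (c i) (c j)) {i₀ : ι}
    (h₀ : c i₀ = 0) : HasNondegenerateConfiguration K a (Nat.card ι - 1) := by
  classical
  cases nonempty_fintype ι
  obtain ⟨i₁, hi₁⟩ := exists_ne i₀
  have hw : 3 ≤ hammingNorm (c i₁) := by
    simpa only [h₀, hammingDist_zero_right] using hc hi₁
  have : Nonempty (DirectionIdx a) := by
    obtain ⟨j, hj⟩ := Finset.card_pos.mp (two_pos.trans hw)
    obtain ⟨l, -⟩ := Fin.exists_succ_eq.mpr (Finset.mem_filter.mp hj).2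
    exact ⟨⟨j, l⟩⟩
  let ι' := {i // i ∉ ({i₀, i₁} : Finset ι)}
  have hcard : Nat.card ι - 1 = Nat.card (Option ι') := by
    have := Fintype.one_lt_card (α := ι)
    rw [Finite.card_option, Nat.card_eq_fintype_card, Nat.card_eq_fintype_card,
      Fintype.card_subtype_compl, Fintype.card_coe, Finset.card_pair hi₁.symm]
    omega
  refine hasNondegenerateConfiguration_of_isNondegenerateAt (isNondegenerateAt_code (K := K)
    (c := fun i : ι' => c i) (hc.comp_of_injective Subtype.val_injective) (w := c i₁) ?_ ?_ ?_)
    hcard.le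
  · exact fun i => h₀ ▸ hc fun h => i.2 (by simp [h])
  · exact fun i => hc fun h => i.2 (by simp [h])
  · omega

end Code

/-! ### Hamming codes -/

section HammingCode

theorem three_le_hammingNorm_of_sum_smul_eq_zero {ι F M : Type*} [Fintype ι] [Field F]
    [DecidableEq F] [AddCommGroup M] [Module F M] [Nontrivial ι] {h : ι → M}
    (hh : Pairwise fun i j => LinearIndependent F ![h i, h j]) {z : ι → F} (hz : z ≠ 0)
    (hsum : ∑ i, z i • h i = 0) : 3 ≤ hammingNorm z := by
  classical
  by_contra! hlt
  obtain ⟨i, hi⟩ := Function.ne_iff.mp hz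
  obtain ⟨j, hji, hj⟩ : ∃ j ≠ i, ∀ m, m ≠ i ∧ m ≠ j → z m = 0 := by
    by_cases hex : ∃ j ≠ i, z j ≠ 0
    · obtain ⟨j, hji, hj⟩ := hex
      refine ⟨j, hji, fun m hm => by_contra fun hzm => hlt.not_ge ?_⟩
      rw [← Finset.card_eq_three.mpr ⟨i, j, m, hji.symm, hm.1.symm, hm.2.symm, rfl⟩]
      refine Finset.card_le_card fun x hx => ?_
      simp only [Finset.mem_insert, Finset.mem_singleton] at hx
      rcases hx with rfl | rfl | rfl <;> simpa
    · push Not at hex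
      obtain ⟨j, hj⟩ := exists_ne i
      exact ⟨j, hj, fun m hm => hex m hm.1⟩
  rw [Fintype.sum_eq_add i j hji.symm fun m hm => by rw [hj m hm, zero_smul]] at hsum
  exact hi (LinearIndependent.pair_iff.mp (hh hji.symm) _ _ hsum).1

theorem linearIndependent_pair_of_det_ne_zero {F : Type*} [Field F] {x y : F × F}
    (h : x.1 * y.2 - x.2 * y.1 ≠ 0) : LinearIndependent F ![x, y] := by
  refine LinearIndependent.pair_iff.mpr fun s t hst => ?_
  obtain ⟨h1, h2⟩ := Prod.ext_iff.mp hst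
  simp only [Prod.fst_add, Prod.snd_add, Prod.smul_fst, Prod.smul_snd, smul_eq_mul, Prod.fst_zero,
    Prod.snd_zero] at h1 h2
  refine ⟨(mul_eq_zero.mp ?_).resolve_right h, (mul_eq_zero.mp ?_).resolve_right h⟩
  · linear_combination y.2 * h1 - y.1 * h2
  · linear_combination x.1 * h2 - x.2 * h1

/-- Representatives of the points of the projective line over `F`. -/
def projectiveLinePoint {F : Type*} [Field F] : Option F → F × F
  | none => (0, 1)
  | some s => (1, s)

theorem linearIndependent_projectiveLinePoint_pair {F : Type*} [Field F] :
    Pairwise fun s t : Option F =>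
      LinearIndependent F ![projectiveLinePoint s, projectiveLinePoint t] := by
  rintro (_ | s) (_ | t) hst <;> refine linearIndependent_pair_of_det_ne_zero ?_
  · exact (hst rfl).elim
  · simp [projectiveLinePoint]
  · simp [projectiveLinePoint]
  · simpa [projectiveLinePoint, sub_eq_zero, eq_comm] using hst

section ParityCheck

variable {F : Type*} [Field F] {r : ℕ} (e : Fin (r + 2) ≃ Option F)

/-- The parity check map of the Hamming code, whose columns represent the points of the projective
line over `F`. -/
def parityCheck : (Fin (r + 2) → F) →ₗ[F] F × F :=
  Fintype.linearCombination F (projectiveLinePoint ∘ e)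

theorem finrank_ker_parityCheck : Module.finrank F (LinearMap.ker (parityCheck e)) = r := by
  have hsurj : Function.Surjective (parityCheck e) := fun x =>
    ⟨Pi.single (e.symm (some 0)) x.1 + Pi.single (e.symm none) x.2, by
      simp [parityCheck, projectiveLinePoint, Fintype.linearCombination_apply_single]⟩
  have h := LinearMap.finrank_range_add_finrank_ker (parityCheck e)
  rw [LinearMap.range_eq_top.mpr hsurj, finrank_top, Module.finrank_prod, Module.finrank_self,
    Module.finrank_fin_fun] at h
  omega

theorem three_le_hammingDist_of_mem_ker_parityCheck [DecidableEq F] {x y : Fin (r + 2) → F}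
    (hx : x ∈ LinearMap.ker (parityCheck e)) (hy : y ∈ LinearMap.ker (parityCheck e))
    (hxy : x ≠ y) : 3 ≤ hammingDist x y := by
  have hsub : ∑ j, (y - x) j • projectiveLinePoint (e j) = 0 := by
    simpa only [parityCheck, Fintype.linearCombination_apply, LinearMap.mem_ker,
      Function.comp_apply] using sub_mem hy hx
  have hcolumns : Pairwise fun i j =>
      LinearIndependent F ![projectiveLinePoint (e i), projectiveLinePoint (e j)] :=
    linearIndependent_projectiveLinePoint_pair.comp_of_injective e.injective
  rw [hammingDist_eq_hammingNorm, neg_add_eq_sub]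
  exact three_le_hammingNorm_of_sum_smul_eq_zero hcolumns (sub_ne_zero.mpr hxy.symm) hsub

end ParityCheck

theorem hasNondegenerateConfiguration_of_card_eq (F : Type*) [Field F] [Fintype F] {r : ℕ}
    (hF : Fintype.card F = r + 1) (K : Type*) [Field K] [CharZero K] :
    HasNondegenerateConfiguration K (fun _ : Fin (r + 2) => r) ((r + 1) ^ r - 1) := by
  classical
  obtain ⟨e⟩ : Nonempty (Fin (r + 2) ≃ Option F) := Fintype.card_eq.mp (by simp [hF])
  let σ := (Fintype.equivFinOfCardEq hF).trans (Equiv.swap (Fintype.equivFinOfCardEq hF 0) 0)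
  have hσ : σ 0 = 0 := by simp [σ]
  have hcard : Nat.card (LinearMap.ker (parityCheck e)) = (r + 1) ^ r := by
    rw [Module.natCard_eq_pow_finrank (K := F), finrank_ker_parityCheck, Nat.card_eq_fintype_card,
      hF]
  have : Nontrivial (LinearMap.ker (parityCheck e)) := by
    have := Fintype.one_lt_card (α := F)
    exact Module.nontrivial_of_finrank_pos (R := F) (by rw [finrank_ker_parityCheck]; omega)
  rw [← hcard]
  refine hasNondegenerateConfiguration_of_code
    (c := fun (x : LinearMap.ker (parityCheck e)) j => σ (x.1 j)) (i₀ := 0) (fun x y hxy => ?_)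
    (funext fun _ => hσ)
  beta_reduce
  rw [hammingDist_comp (fun _ => σ) fun _ => σ.injective]
  exact three_le_hammingDist_of_mem_ker_parityCheck e x.2 y.2 (Subtype.coe_injective.ne hxy)

theorem hasNondegenerateConfiguration_five (K : Type*) [Field K] [CharZero K] :
    HasNondegenerateConfiguration K (fun _ : Fin 5 => 3) 63 := by
  let := Fintype.ofFinite (GaloisField 2 2)
  have hcard : Fintype.card (GaloisField 2 2) = 3 + 1 := by
    rw [← Nat.card_eq_fintype_card, GaloisField.card 2 2 two_ne_zero]
    norm_num
  exact hasNondegenerateConfiguration_of_card_eq (GaloisField 2 2) hcard K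

end HammingCode

/-! ### Adding a factor -/

section Extension

theorem exists_linearIndependent_sumElim {K V ι κ : Type*} [Field K] [AddCommGroup V] [Module K V]
    [Module.Finite K V] [Finite ι] [Finite κ] {v : ι → V} (hv : LinearIndependent K v) {S : Set V}
    (hS : Submodule.span K S = ⊤) (h : Nat.card ι + Nat.card κ ≤ Module.finrank K V) :
    ∃ w : κ → V, (∀ k, w k ∈ S) ∧ LinearIndependent K (Sum.elim v w) := by
  cases nonempty_fintype ι
  let M := Submodule.span K (Set.range v)
  have hspan : Submodule.span K (M.mkQ '' S) = ⊤ := by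
    rw [Submodule.span_image, hS, Submodule.map_top, Submodule.range_mkQ]
  have hrank : Nat.card κ ≤ Module.finrank K (Submodule.span K (M.mkQ '' S)) := by
    have hM : Module.finrank K M = Nat.card ι := by
      rw [Nat.card_eq_fintype_card]
      exact finrank_span_eq_card hv
    rw [hspan, finrank_top]
    have := M.finrank_quotient_add_finrank
    omega
  obtain ⟨f, hfS, -, hf⟩ := Submodule.exists_fun_fin_finrank_span_eq K (M.mkQ '' S)
  let e : κ ↪ Fin _ := (Finite.equivFin κ).toEmbedding.trans (Fin.castLEEmb hrank)
  choose w hwS hw using fun k => hfS (e k)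
  refine ⟨w, hwS, LinearIndependent.sumElim_of_quotient (linearIndependent_span hv) w ?_⟩
  have hwf : Submodule.Quotient.mk ∘ w = f ∘ e := funext hw
  exact hwf ▸ hf.comp e e.injective

variable {q : ℕ} {a : Fin q → ℕ} {K ι : Type*} [Field K]

theorem span_range_segre : Submodule.span K (Set.range (segre a K)) = ⊤ := by
  rw [eq_top_iff, ← (Pi.basisFun K (BIdx q a)).span_eq]
  refine Submodule.span_mono ?_
  rintro _ ⟨f, rfl⟩
  exact ⟨_, (segre_single f).trans (Pi.basisFun_apply K _ f).symm⟩

theorem exists_linearIndepOn_tangentFamily [Finite ι] {T : Set ι} {p : T → FactorTuple a K}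
    {u : T → FactorDirections a K} (h : LinearIndependent K (tangentFamily p u))
    (hcard : Nat.card T * ∑ j, a j + Nat.card ι ≤ ∏ j, (a j + 1)) :
    ∃ (p : ι → FactorTuple a K) (u : ι → FactorDirections a K),
      LinearIndepOn K (tangentFamily p u) {x | x.2 = none ∨ x.1 ∈ T} := by
  classical
  have hrank : Nat.card (T × Option (DirectionIdx a)) + Nat.card ↑Tᶜ ≤
      Module.finrank K (BIdx q a → K) := by
    have hT := Nat.card_congr (Equiv.Set.sumCompl T)
    rw [Nat.card_sum] at hT
    simp only [Nat.card_prod, Finite.card_option, Nat.card_sigma, Nat.card_fin,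
      Module.finrank_pi, Fintype.card_pi, Fintype.card_fin]
    linarith
  obtain ⟨w, hw, hli⟩ := exists_linearIndependent_sumElim h span_range_segre hrank
  choose r hr using hw
  let P (i : ι) : FactorTuple a K := Sum.elim p r ((Equiv.Set.sumCompl T).symm i)
  let U (i : ι) : FactorDirections a K := Sum.elim u 0 ((Equiv.Set.sumCompl T).symm i)
  let ψ : (T × Option (DirectionIdx a)) ⊕ ↑Tᶜ → ι × Option (DirectionIdx a) :=
    Sum.elim (Prod.map (↑) id) fun i => (i, none)
  have hψ : Function.Injective ψ :=
    (Subtype.val_injective.prodMap Function.injective_id).sumElim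
      (fun i j hij => Subtype.ext congr(($hij).1))
      fun x i hxi => i.2 (by simpa using congr(($hxi.symm).1 ∈ T))
  have hfamily : tangentFamily P U ∘ ψ = Sum.elim (tangentFamily p u) w := by
    ext (⟨i, o⟩ | i) : 1
    · simp [ψ, P, U, tangentFamily]
    · simp [ψ, P, U, tangentFamily, segreTangent, hr]
  refine ⟨P, U, LinearIndepOn.mono ((linearIndepOn_range_iff hψ _).mpr (hfamily ▸ hli)) ?_⟩
  rintro ⟨i, o⟩ hio
  by_cases hi : i ∈ T
  · exact ⟨.inl (⟨i, hi⟩, o), rfl⟩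
  · obtain rfl : o = none := hio.resolve_right hi
    exact ⟨.inr ⟨i, hi⟩, rfl⟩

theorem exists_forall_linearIndepOn_tangentFamily {α : Type*} [Infinite K] [Finite ι] [Finite α]
    {S : α → Set (ι × Option (DirectionIdx a))}
    (h : ∀ s, ∃ (p : ι → FactorTuple a K) (u : ι → FactorDirections a K),
      LinearIndepOn K (tangentFamily p u) (S s)) :
    ∃ (p : ι → FactorTuple a K) (u : ι → FactorDirections a K),
      ∀ s, LinearIndepOn K (tangentFamily p u) (S s) := by
  have hgen : HoldsGenerically fun x : ParameterIdx ι a → K => ∀ s, LinearIndepOn K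
      (tangentFamily (fun i j m => MvPolynomial.eval x (genericFactorTuple K a i j m))
        fun i j l m => MvPolynomial.eval x (genericFactorDirections K a i j l m)) (S s) :=
    .forall_of_finite fun s => by
      obtain ⟨p, u, hpu⟩ := h s
      have hpu : LinearIndepOn K
          (tangentFamily (fun i j m => MvPolynomial.eval (parameterPoint p u)
            (genericFactorTuple K a i j m)) fun i j l m => MvPolynomial.eval (parameterPoint p u)
              (genericFactorDirections K a i j l m)) (S s) := by
        simpa only [eval_genericFactorTuple, eval_genericFactorDirections] using hpu
      simp only [LinearIndepOn, tangentFamily_map] at hpu ⊢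
      exact holdsGenerically_linearIndependent _ _ hpu
  obtain ⟨x, hx⟩ := hgen.exists_of_infinite
  exact ⟨_, _, hx⟩

theorem eq_zero_of_linearIndepOn_of_sum_smul_eq_zero {V X : Type*} [AddCommGroup V] [Module K V]
    [Fintype X] {v : X → V} {S : Set X} (h : LinearIndepOn K v S) {c : X → K}
    (hc : ∀ x ∉ S, c x = 0) (h0 : ∑ x, c x • v x = 0) : c = 0 := by
  classical
  ext x
  by_contra hx
  refine hx (linearIndepOn_iff'.mp h {x | c x ≠ 0} c (fun y hy => ?_) ?_ x (by simpa using hx))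
  · by_contra hyS
    simp [hc y hyS] at hy
  · rwa [Finset.sum_filter_of_ne fun y _ => left_ne_zero_of_smul]

end Extension

section Cons

variable {m : ℕ} {a : Fin (m + 1) → ℕ} {R : Type*}

theorem sum_directionIdx_succ {M : Type*} [AddCommMonoid M] (F : DirectionIdx a → M) :
    ∑ b, F b = ∑ l, F ⟨0, l⟩ + ∑ b : DirectionIdx fun j : Fin m => a j.succ, F ⟨b.1.succ, b.2⟩ := by
  simp only [Fintype.sum_sigma, Fin.sum_univ_succ (n := m)]

theorem update_cons_succ (x : Fin (a 0 + 1) → R) (p : FactorTuple (fun j : Fin m => a j.succ) R)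
    (j : Fin m) (z : Fin (a j.succ + 1) → R) :
    (Function.update (Fin.cons x p) j.succ z : FactorTuple a R) =
      Fin.cons x (Function.update p j z) :=
  (Fin.cons_update ..).symm

variable [CommRing R] (x : Fin (a 0 + 1) → R) (p : FactorTuple (fun j : Fin m => a j.succ) R)
  (y : Fin (a 0) → Fin (a 0 + 1) → R) (u : FactorDirections (fun j : Fin m => a j.succ) R)
  (s : Fin (a 0 + 1)) (f : BIdx m fun j => a j.succ) (l l' : Fin (a 0))
  (b : DirectionIdx fun j : Fin m => a j.succ)

theorem segre_cons : segre a R (Fin.cons x p) (Fin.cons s f) = x s * segre _ R p f := by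
  simp [Fin.prod_univ_succ]

theorem segreTangent_cons_none :
    segreTangent (a := a) (Fin.cons x p) (Fin.cons y u) none (Fin.cons s f) =
      x s * segreTangent p u none f :=
  segre_cons ..

theorem segreTangent_cons_zero :
    segreTangent (a := a) (Fin.cons x p) (Fin.cons y u) (some ⟨0, l⟩) (Fin.cons s f) =
      y l s * segreTangent p u none f := by
  simp only [segreTangent, Fin.update_cons_zero, Fin.cons_zero, segre_cons]

theorem segreTangent_cons_succ :
    segreTangent (a := a) (Fin.cons x p) (Fin.cons y u) (some ⟨b.1.succ, b.2⟩) (Fin.cons s f) =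
      x s * segreTangent p u (some b) f := by
  simp only [segreTangent, update_cons_succ, Fin.cons_succ, segre_cons]

theorem segreSecond_cons_zero_zero :
    segreSecond (a := a) (Fin.cons x p) (Fin.cons y u) ⟨0, l⟩ ⟨0, l'⟩ = 0 :=
  if_pos rfl

theorem segreSecond_cons_zero_succ :
    segreSecond (a := a) (Fin.cons x p) (Fin.cons y u) ⟨0, l⟩ ⟨b.1.succ, b.2⟩ (Fin.cons s f) =
      y l s * segreTangent p u (some b) f := by
  simp only [segreSecond, segreTangent, (Fin.succ_ne_zero b.1).symm, if_false,
    Fin.update_cons_zero, update_cons_succ, Fin.cons_zero, Fin.cons_succ, segre_cons]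

theorem segreSecond_cons_succ_zero :
    segreSecond (a := a) (Fin.cons x p) (Fin.cons y u) ⟨b.1.succ, b.2⟩ ⟨0, l⟩ (Fin.cons s f) =
      y l s * segreTangent p u (some b) f := by
  simp only [segreSecond, segreTangent, Fin.succ_ne_zero b.1, if_false, Fin.update_cons_zero,
    update_cons_succ, Fin.cons_zero, Fin.cons_succ, segre_cons]

end Cons

section Prepend

variable {m : ℕ} {a : Fin (m + 1) → ℕ} {K ι : Type*} [Field K] (g : ι → Fin (a 0 + 1))
  (p : ι → FactorTuple (fun j : Fin m => a j.succ) K)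
  (u : ι → FactorDirections (fun j : Fin m => a j.succ) K)

/-- The points `p` with a new first factor, the coordinate vector chosen by the letter `g i`. -/
def prependPoint (i : ι) : FactorTuple a K := Fin.cons (Pi.single (g i) 1) (p i)

/-- The directions `u` together with the coordinate directions in a new first factor, at the points
`prependPoint g p`. -/
def prependDirections (i : ι) : FactorDirections a K :=
  Fin.cons (fun l => Pi.single ((g i).succAbove l) 1) (u i)

/-- The coefficients, in terms of `tangentFamily p u`, of the slice of a combination of tangent
vectors at `prependPoint g p` consisting of the coordinates at words starting with `s`. -/
def sliceCoeff (c : ι × Option (DirectionIdx a) → K) (s : Fin (a 0 + 1)) :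
    ι × Option (DirectionIdx fun j : Fin m => a j.succ) → K
  | (i, none) =>
    Fin.insertNth (α := fun _ => K) (g i) (c (i, none)) (fun l => c (i, some ⟨0, l⟩)) s
  | (i, some b) => if s = g i then c (i, some ⟨b.1.succ, b.2⟩) else 0

variable {g} {c : ι × Option (DirectionIdx a) → K} {i₀ : ι} {s : Fin (a 0 + 1)}

theorem sliceCoeff_eq_zero {x : ι × Option (DirectionIdx fun j : Fin m => a j.succ)}
    (hx : x ∉ {x : ι × Option (DirectionIdx fun j : Fin m => a j.succ) |
      x.2 = none ∨ g x.1 = s ∨ x.1 = i₀}) : sliceCoeff g c s x = 0 := by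
  obtain ⟨i, _ | b⟩ := x
  · simp at hx
  · simp only [Set.mem_ofPred_eq, reduceCtorEq, false_or, not_or] at hx
    exact if_neg (Ne.symm hx.1)

variable {p u}

theorem sum_smul_tangentFamily_prepend [Fintype ι] (f : BIdx m fun j => a j.succ) :
    (∑ x, c x • tangentFamily (prependPoint g p) (prependDirections g u) x) (Fin.cons s f) =
      (∑ y, sliceCoeff g c s y • tangentFamily p u y) f := by
  simp only [Fintype.sum_prod_type, Finset.sum_apply, Pi.smul_apply, smul_eq_mul]
  refine Finset.sum_congr rfl fun i _ => ?_
  have hinsert : sliceCoeff g c s (i, none) = c (i, none) * (Pi.single (g i) 1 : _ → K) s +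
      ∑ l, c (i, some ⟨0, l⟩) * (Pi.single ((g i).succAbove l) 1 : _ → K) s := by
    obtain rfl | ⟨l, rfl⟩ := Fin.eq_self_or_eq_succAbove (g i) s
    · simp [sliceCoeff, (Fin.succAbove_ne _ _).symm]
    · simp [sliceCoeff, Pi.single_apply, Fin.succAbove_ne]
  simp only [Fintype.sum_option, sum_directionIdx_succ, tangentFamily, prependPoint,
    prependDirections, segreTangent_cons_none, segreTangent_cons_zero, segreTangent_cons_succ,
    hinsert, add_mul, Finset.sum_mul, mul_assoc, add_assoc]
  simp only [sliceCoeff, Pi.single_apply, ite_mul, mul_ite, one_mul, zero_mul, mul_zero]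

variable [Finite ι]

theorem linearIndependent_tangentFamily_prepend
    (h : ∀ s, LinearIndepOn K (tangentFamily p u) {x | x.2 = none ∨ g x.1 = s ∨ x.1 = i₀}) :
    LinearIndependent K (tangentFamily (prependPoint g p) (prependDirections g u)) := by
  cases nonempty_fintype ι
  rw [Fintype.linearIndependent_iff]
  intro c hc
  have hslice (s) : sliceCoeff g c s = 0 :=
    eq_zero_of_linearIndepOn_of_sum_smul_eq_zero (h s) (fun _ => sliceCoeff_eq_zero)
      (funext fun f => by rw [← sum_smul_tangentFamily_prepend, hc]; rfl)
  rintro ⟨i, _ | ⟨j, l⟩⟩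
  · simpa [sliceCoeff] using congr_fun (hslice (g i)) (i, none)
  · cases j using Fin.cases with
    | zero => simpa [sliceCoeff] using congr_fun (hslice ((g i).succAbove l)) (i, none)
    | succ j => simpa [sliceCoeff] using congr_fun (hslice (g i)) (i, some ⟨j, l⟩)

theorem eq_zero_of_slice_eq_sum_smul_tangentFamily
    (h : LinearIndepOn K (tangentFamily p u) {x | x.2 = none ∨ g x.1 = s ∨ x.1 = i₀})
    (hs : s ≠ g i₀) {F : BIdx (m + 1) a → K}
    (hF : F ∈ Submodule.span K
      (Set.range (tangentFamily (prependPoint g p) (prependDirections g u))))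
    {d : DirectionIdx (fun j : Fin m => a j.succ) → K}
    (hd : ∀ f, F (Fin.cons s f) = (∑ b, d b • tangentFamily p u (i₀, some b)) f) : d = 0 := by
  classical
  cases nonempty_fintype ι
  obtain ⟨c, rfl⟩ := (Submodule.mem_span_range_iff_exists_fun K).mp hF
  let e (x : ι × Option (DirectionIdx fun j : Fin m => a j.succ)) : K :=
    if x.1 = i₀ then x.2.elim 0 d else 0
  have he : ∑ x, e x • tangentFamily p u x = ∑ b, d b • tangentFamily p u (i₀, some b) := by
    rw [Fintype.sum_prod_type, Finset.sum_eq_single i₀ (fun i _ hi => by simp [e, hi]) (by simp)]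
    simp [Fintype.sum_option, e]
  have hce : sliceCoeff g c s - e = 0 := by
    refine eq_zero_of_linearIndepOn_of_sum_smul_eq_zero h (fun x hx => ?_) ?_
    · have hxe : e x = 0 := if_neg fun hi => hx (.inr (.inr hi))
      rw [Pi.sub_apply, sliceCoeff_eq_zero hx, hxe, sub_zero]
    · simp only [Pi.sub_apply, sub_smul, Finset.sum_sub_distrib, he]
      ext f
      rw [Pi.sub_apply, ← hd, ← sum_smul_tangentFamily_prepend, sub_self, Pi.zero_apply]
  ext b
  simpa [sliceCoeff, hs, e] using congr_fun hce (i₀, some b)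

theorem isNondegenerateAt_prepend [Nonempty (DirectionIdx fun j : Fin m => a j.succ)]
    (ha : 0 < a 0)
    (h : ∀ s, LinearIndepOn K (tangentFamily p u) {x | x.2 = none ∨ g x.1 = s ∨ x.1 = i₀}) :
    IsNondegenerateAt (prependPoint g p) (prependDirections g u) i₀ where
  linearIndependent := linearIndependent_tangentFamily_prepend h
  eq_zero t ht := by
    classical
    have hsucc : (fun b : DirectionIdx fun j : Fin m => a j.succ => t ⟨b.1.succ, b.2⟩) = 0 := by
      refine eq_zero_of_slice_eq_sum_smul_tangentFamily (h _) ((g i₀).succAbove_ne ⟨0, ha⟩)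
        (ht ⟨0, ⟨0, ha⟩⟩) fun f => ?_
      simp [sum_directionIdx_succ, prependPoint, prependDirections, segreSecond_cons_zero_zero,
        segreSecond_cons_succ_zero, tangentFamily]
    obtain ⟨b₀⟩ := ‹Nonempty (DirectionIdx fun j : Fin m => a j.succ)›
    ext ⟨j, l⟩
    cases j using Fin.cases with
    | succ j => exact congr_fun hsucc ⟨j, l⟩
    | zero =>
      have hsingle : (Pi.single b₀ (t ⟨0, l⟩) : _ → K) = 0 := by
        refine eq_zero_of_slice_eq_sum_smul_tangentFamily (h _) ((g i₀).succAbove_ne l)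
          (ht ⟨b₀.1.succ, b₀.2⟩) fun f => ?_
        rw [sum_directionIdx_succ, Finset.sum_eq_zero (s := Finset.univ (α := DirectionIdx _))
          fun b _ => by rw [congr_fun hsucc b, Pi.zero_apply, zero_smul],
          Fintype.sum_eq_single b₀ fun b hb => by rw [Pi.single_eq_of_ne hb, zero_smul]]
        simp [prependPoint, prependDirections, segreSecond_cons_zero_succ, tangentFamily,
          Pi.single_apply]
      simpa using hsingle

end Prepend

section Induction

theorem hasNondegenerateConfiguration_prepend {K : Type*} [Field K] [Infinite K] {m N : ℕ}
    {a : Fin (m + 1) → ℕ} [Nonempty (DirectionIdx fun j : Fin m => a j.succ)] (ha : 0 < a 0)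
    (h : HasNondegenerateConfiguration K (fun j : Fin m => a j.succ) (N + 1))
    (hN : (N + 1) * ∑ j : Fin m, a j.succ + (N * (a 0 + 1) + 1) ≤ ∏ j : Fin m, (a j.succ + 1)) :
    HasNondegenerateConfiguration K a (N * (a 0 + 1) + 1) := by
  classical
  obtain ⟨p, u, hpu⟩ := h
  let ι := Option (Fin N × Fin (a 0 + 1))
  have hι : Nat.card ι = N * (a 0 + 1) + 1 := by simp [ι]
  let g : ι → Fin (a 0 + 1) := fun i => i.elim 0 Prod.snd
  let T (s : Fin (a 0 + 1)) : Set ι := {i | g i = s ∨ i = none}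
  let e (s : Fin (a 0 + 1)) (i : T s) : Fin (N + 1) :=
    (finSuccEquiv N).symm (i.1.map Prod.fst)
  have he (s) : Function.Injective (e s) := by
    rintro ⟨i, hi⟩ ⟨i', hi'⟩ he
    have hmap : i.map Prod.fst = i'.map Prod.fst := (finSuccEquiv N).symm.injective he
    rcases i with _ | ⟨x, z⟩ <;> rcases i' with _ | ⟨x', z'⟩
    · rfl
    · cases hmap
    · cases hmap
    · obtain rfl : z = s := hi.resolve_right (by simp)
      obtain rfl : z' = z := hi'.resolve_right (by simp)
      obtain rfl : x = x' := by simpa using hmap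
      rfl
  have hT (s) : ∃ (p : ι → FactorTuple (fun j : Fin m => a j.succ) K)
      (u : ι → FactorDirections (fun j : Fin m => a j.succ) K),
      LinearIndepOn K (tangentFamily p u) {x | x.2 = none ∨ x.1 ∈ T s} := by
    refine exists_linearIndepOn_tangentFamily (p := p ∘ e s) (u := u ∘ e s) ?_ ?_
    · exact (hpu 0).linearIndependent.comp (Prod.map (e s) id)
        ((he s).prodMap Function.injective_id)
    · have hTs : Nat.card (T s) ≤ N + 1 := by
        simpa using Nat.card_le_card_of_injective (e s) (he s)
      rw [hι]
      exact (Nat.add_le_add_right (Nat.mul_le_mul_right _ hTs) _).trans hN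
  obtain ⟨p', u', hpu'⟩ := exists_forall_linearIndepOn_tangentFamily hT
  have : Nonempty (DirectionIdx a) := ⟨⟨0, ⟨0, ha⟩⟩⟩
  exact hasNondegenerateConfiguration_of_isNondegenerateAt
    (isNondegenerateAt_prepend (g := g) (i₀ := none) ha hpu') hι.ge

theorem succ_mul_le_pow_and_le_pow {r k N : ℕ} (hk : k * (3 * (r + 1) + 16) ≤ 63 * 4 ^ (r + 1 + 2))
    (hN : N = (k + 2) / 4) :
    (N + 1) * (3 * r + 16) ≤ 63 * 4 ^ (r + 2) ∧
      (N + 1) * (3 * (r + 5)) + (N * 4 + 1) ≤ 4 ^ (r + 5) := by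
  have hNk : 4 * (N + 1) ≤ k + 6 := by omega
  have hr : r < 2 ^ r := Nat.lt_two_pow_self
  have h4 : 4 ^ r = 2 ^ r * 2 ^ r := by rw [← mul_pow]; norm_num
  simp only [pow_succ, h4] at hk ⊢
  constructor
  · rcases le_or_gt (6 * r + 32) k with h | h <;> nlinarith
  · obtain rfl | hr0 := r.eq_zero_or_pos
    · omega
    · have : 2 ≤ 2 ^ r := by omega
      nlinarith

theorem hasNondegenerateConfiguration_three (K : Type*) [Field K] [CharZero K] (r : ℕ) {k : ℕ}
    (hk : k * (3 * r + 16) ≤ 63 * 4 ^ (r + 2)) :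
    HasNondegenerateConfiguration K (fun _ : Fin (r + 5) => 3) k := by
  induction r generalizing k with
  | zero => exact (hasNondegenerateConfiguration_five K).mono (by omega)
  | succ r ih =>
    obtain ⟨hconfig, hrank⟩ := succ_mul_le_pow_and_le_pow hk rfl
    have : Nonempty (DirectionIdx fun _ : Fin (r + 5) => 3) := ⟨⟨0, 0⟩⟩
    refine (hasNondegenerateConfiguration_prepend (a := fun _ : Fin (r + 5 + 1) => 3)
      three_pos (ih hconfig) ?_).mono (by omega)
    simpa [mul_comm (r + 5)] using hrank

end Induction

/-! ### Derivations of the Segre map -/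

section SegreDerivation

variable {k K : Type*} [CommRing k] [CommRing K] [Algebra k K] (D : Derivation k K K)

theorem derivation_comp_sum_smul {X Y : Type*} [Fintype X] (g : X → K) (v : X → Y → K) :
    D ∘ ∑ x, g x • v x = ∑ x, D (g x) • v x + ∑ x, g x • (D ∘ v x) := by
  ext y
  simp [← Finset.sum_add_distrib, add_comm, mul_comm]

theorem derivation_prod {α : Type*} [DecidableEq α] (s : Finset α) (v : α → K) :
    D (∏ j ∈ s, v j) = ∑ j ∈ s, D (v j) * ∏ i ∈ s.erase j, v i := by
  induction s using Finset.induction_on with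
  | empty => simp
  | insert j s hj ih =>
    rw [Finset.prod_insert hj, D.leibniz, ih, Finset.sum_insert hj, Finset.erase_insert hj,
      add_comm, smul_eq_mul, smul_eq_mul, mul_comm, Finset.mul_sum]
    refine congrArg _ (Finset.sum_congr rfl fun i hi => ?_)
    have hji : j ≠ i := fun h => hj (h ▸ hi)
    rw [Finset.erase_insert_of_ne hji, Finset.prod_insert (by simp [hj])]
    ring

variable {q : ℕ} {a : Fin q → ℕ}

theorem derivation_comp_segre (v : FactorTuple a K) :
    D ∘ segre a K v = ∑ j, segre a K (Function.update v j (D ∘ v j)) := by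
  ext f
  rw [Function.comp_apply, segre_apply, derivation_prod, Finset.sum_apply]
  refine Finset.sum_congr rfl fun j _ => ?_
  rw [segre_apply, ← Finset.mul_prod_erase _ _ (Finset.mem_univ j), Function.update_self]
  refine congrArg _ (Finset.prod_congr rfl fun i hi => ?_)
  rw [Function.update_of_ne (Finset.ne_of_mem_erase hi)]

theorem derivation_comp_segre_mem_segreTangentSpace (v : FactorTuple a K) :
    D ∘ segre a K v ∈ segreTangentSpace v := by
  rw [derivation_comp_segre]
  exact sum_mem fun j _ => segre_update_mem_segreTangentSpace v j _

variable {D}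

theorem derivation_comp_segre_eq_zero {v : FactorTuple a K} (hv : ∀ j, D ∘ v j = 0) :
    D ∘ segre a K v = 0 := by
  rw [derivation_comp_segre]
  exact Finset.sum_eq_zero fun j _ => by rw [hv, MultilinearMap.map_update_zero]

theorem derivation_comp_segre_eq_segre_update {v : FactorTuple a K} {j : Fin q}
    {z : Fin (a j + 1) → K} (hj : D ∘ v j = z) (hv : ∀ i ≠ j, D ∘ v i = 0) :
    D ∘ segre a K v = segre a K (Function.update v j z) := by
  rw [derivation_comp_segre, Fintype.sum_eq_single j, hj]
  intro i hi
  rw [hv i hi, MultilinearMap.map_update_zero]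

variable {p : FactorTuple a K} {u : FactorDirections a K}

theorem derivation_comp_segreTangent_eq_zero (hp : ∀ j, D ∘ p j = 0) (hu : ∀ j l, D ∘ u j l = 0)
    (o : Option (DirectionIdx a)) : D ∘ segreTangent p u o = 0 := by
  cases o with
  | none => exact derivation_comp_segre_eq_zero hp
  | some b =>
    refine derivation_comp_segre_eq_zero fun j => ?_
    obtain rfl | hj := eq_or_ne j b.1
    · rw [Function.update_self, hu]
    · rw [Function.update_of_ne hj, hp]

variable {b : DirectionIdx a} (hb : D ∘ p b.1 = u b.1 b.2) (hp : ∀ j ≠ b.1, D ∘ p j = 0)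
include hb hp

theorem derivation_comp_segreTangent_none :
    D ∘ segreTangent p u none = segreTangent p u (some b) :=
  derivation_comp_segre_eq_segre_update hb hp

theorem derivation_comp_segreTangent_some (hu : ∀ j l, D ∘ u j l = 0) (c : DirectionIdx a) :
    D ∘ segreTangent p u (some c) = segreSecond p u c b := by
  rw [segreSecond]
  split_ifs with hcb
  · refine derivation_comp_segre_eq_zero fun j => ?_
    obtain rfl | hj := eq_or_ne j c.1
    · rw [Function.update_self, hu]
    · rw [Function.update_of_ne hj, hp j (hcb ▸ hj)]
  · refine derivation_comp_segre_eq_segre_update ?_ fun j hj => ?_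
    · rw [Function.update_of_ne (Ne.symm hcb), hb]
    · obtain rfl | hjc := eq_or_ne j c.1
      · rw [Function.update_self, hu]
      · rw [Function.update_of_ne hjc, hp j hj]

end SegreDerivation

section TangentSpace

variable {q : ℕ} {a : Fin q → ℕ} {K : Type*} [Field K] {v : FactorTuple a K}

theorem segre_ne_zero_iff : segre a K v ≠ 0 ↔ ∀ j, v j ≠ 0 := by
  constructor
  · exact fun h j hj => h ((segre a K).map_coord_zero j hj)
  · intro h
    choose f hf using fun j => Function.ne_iff.mp (h j)
    refine Function.ne_iff.mpr ⟨f, ?_⟩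
    rw [segre_apply]
    exact Finset.prod_ne_zero_iff.mpr fun j _ => hf j

variable [Nonempty (Fin q)] {u : FactorDirections a K}

theorem segreTangentSpace_eq_span_range_segreTangent
    (h : ∀ j, Submodule.span K (Set.range fun o : Option (Fin (a j)) => o.elim (v j) (u j)) = ⊤) :
    segreTangentSpace v = Submodule.span K (Set.range (segreTangent v u)) := by
  apply le_antisymm
  · refine iSup_le fun j => ?_
    rw [LinearMap.range_eq_map, ← h j, Submodule.map_span, ← Set.range_comp]
    refine Submodule.span_mono ?_
    rintro _ ⟨_ | l, rfl⟩
    · exact ⟨none, by simp [segreTangent]⟩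
    · exact ⟨some ⟨j, l⟩, rfl⟩
  · rw [Submodule.span_le]
    rintro _ ⟨_ | b, rfl⟩
    · exact segre_mem_segreTangentSpace v
    · exact segre_update_mem_segreTangentSpace v b.1 _

theorem segreTangentSpace_eq_span_of_linearIndependent
    (h : LinearIndependent K (segreTangent v u)) :
    segreTangentSpace v = Submodule.span K (Set.range (segreTangent v u)) := by
  refine segreTangentSpace_eq_span_range_segreTangent fun j => ?_
  let ψ : Option (Fin (a j)) → Option (DirectionIdx a) := Option.map fun l => ⟨j, l⟩
  have hψ : (segre a K).toLinearMap v j ∘ (fun o => o.elim (v j) (u j)) = segreTangent v u ∘ ψ := by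
    ext1 o
    cases o <;> simp [ψ, segreTangent]
  have hj : LinearIndependent K fun o : Option (Fin (a j)) => o.elim (v j) (u j) := by
    refine .of_comp ((segre a K).toLinearMap v j) ?_
    rw [hψ]
    exact h.comp ψ (Option.map_injective fun _ _ hl => by simpa using hl)
  exact hj.span_eq_top_of_card_eq_finrank (by simp)

theorem finrank_segreTangentSpace_le (hv : ∀ j, v j ≠ 0) :
    Module.finrank K (segreTangentSpace v) ≤ 1 + ∑ j, a j := by
  have hu (j : Fin q) : ∃ u : Fin (a j) → Fin (a j + 1) → K, Submodule.span K
      (Set.range fun o : Option (Fin (a j)) => o.elim (v j) u) = ⊤ := by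
    have hvj : LinearIndependent K fun _ : Unit => v j := .of_subsingleton () (hv j)
    obtain ⟨u, -, hu⟩ := exists_linearIndependent_sumElim (κ := Fin (a j)) hvj
      Submodule.span_univ (by simp [add_comm])
    refine ⟨u, ?_⟩
    rw [← hu.span_eq_top_of_card_eq_finrank (by simp [add_comm])]
    refine congrArg _ (Set.ext fun x => ?_)
    simp [Option.exists, eq_comm (a := x)]
  choose u hu using hu
  rw [segreTangentSpace_eq_span_range_segreTangent hu]
  refine (finrank_range_le_card _).trans (le_of_eq ?_)
  simp [add_comm]

end TangentSpace

/-! ### The generic linear space -/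

section SpanningFamily

variable {q : ℕ} {a : Fin q → ℕ} {ι κ k R S : Type*}

/-- The coordinates of a family of points of the Segre cone and of a family of tensors. -/
abbrev CoordIdx (ι κ : Type*) (a : Fin q → ℕ) : Type _ :=
  (ι × Σ j, Fin (a j + 1)) ⊕ (κ × BIdx q a)

/-- The family of points of the Segre cone with coordinates `x`. -/
def points (x : CoordIdx ι κ a → R) (i : ι) : FactorTuple a R := fun j m => x (.inl (i, ⟨j, m⟩))

/-- The family of tensors with coordinates `x`. -/
def tensors (x : CoordIdx ι κ a → R) (r : κ) : BIdx q a → R := fun f => x (.inr (r, f))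

variable [CommRing k] [CommRing R] [CommRing S] [Algebra k R] [Algebra k S]

/-- The tangent vectors at the points with coordinates `x`, in constant directions `u`. -/
def pointTangents (u : ι → FactorDirections a k) (x : CoordIdx ι κ a → R) :
    ι × Option (DirectionIdx a) → BIdx q a → R :=
  tangentFamily (points x) fun i j l m => algebraMap k R (u i j l m)

/-- The tangent vectors at the points with coordinates `x`, in constant directions `u`, together
with the tensors with coordinates `x`. -/
def spanningFamily (u : ι → FactorDirections a k) (x : CoordIdx ι κ a → R) :
    (ι × Option (DirectionIdx a)) ⊕ κ → BIdx q a → R :=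
  Sum.elim (pointTangents u x) (tensors x)

theorem spanningFamily_map (φ : R →ₐ[k] S) (u : ι → FactorDirections a k)
    (x : CoordIdx ι κ a → R) :
    spanningFamily u (fun s => φ (x s)) = fun y f => φ (spanningFamily u x y f) := by
  ext (y | r) f
  · simp only [spanningFamily, pointTangents, Sum.elim_inl, ← φ.commutes]
    exact congr_fun (tangentFamily_map φ.toRingHom (points x) _ y) f
  · rfl

theorem derivation_comp_pointTangents_eq_zero {D : Derivation k R R} {x : CoordIdx ι κ a → R}
    {i : ι} (hD : ∀ j, D ∘ points x i j = 0) (u : ι → FactorDirections a k)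
    (o : Option (DirectionIdx a)) : D ∘ pointTangents u x (i, o) = 0 :=
  derivation_comp_segreTangent_eq_zero hD (fun _ _ => funext fun _ => D.map_algebraMap _) o

end SpanningFamily

section GenericSpace

variable {q : ℕ} {a : Fin q → ℕ} {ι κ k K : Type*} [Field k] [CharZero k] [Field K] [Algebra k K]
  {u : ι → FactorDirections a k} {x : CoordIdx ι κ a → K}

variable (hx : AlgebraicIndependent k x)
include hx

-- Differentiating `segre v = ∑ g y • spanningFamily u x y` along the coordinate `f` of the tensor
-- `r` isolates the basis vector `f`.
theorem span_sup_segreTangentSpace_eq_top [Fintype ι] [Fintype κ] {v : FactorTuple a K}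
    {g : (ι × Option (DirectionIdx a)) ⊕ κ → K} (hg : ∑ y, g y • spanningFamily u x y = segre a K v)
    {r : κ} (hr : g (.inr r) ≠ 0) :
    Submodule.span K (Set.range (spanningFamily u x)) ⊔ segreTangentSpace v = ⊤ := by
  classical
  rw [eq_top_iff, ← (Pi.basisFun K (BIdx q a)).span_eq, Submodule.span_le]
  rintro _ ⟨f, rfl⟩
  obtain ⟨D, hD⟩ := exists_derivation_apply_eq_of_algebraicIndependent hx
    (Pi.single (.inr (r, f)) 1)
  have hpoints (i o) : D ∘ pointTangents u x (i, o) = 0 :=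
    derivation_comp_pointTangents_eq_zero (D := D)
      (fun j => funext fun m => by simp [points, hD]) u o
  have htensors (s : κ) : D ∘ tensors x s = (Pi.single r (Pi.single f 1) : κ → BIdx q a → K) s := by
    obtain rfl | hs := eq_or_ne s r <;> ext f'
    · simp [tensors, hD, Pi.single_apply]
    · simp [tensors, hD, hs]
  have hderiv := derivation_comp_sum_smul D g (spanningFamily u x)
  have hsum : ∑ y, g y • (D ∘ spanningFamily u x y) =
      g (.inr r) • Pi.basisFun K (BIdx q a) f := by
    rw [Fintype.sum_sum_type, Fintype.sum_eq_single r fun s hs => ?_]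
    · simp [spanningFamily, hpoints, htensors]
    · simp [spanningFamily, htensors, hs]
  rw [hg, hsum] at hderiv
  rw [SetLike.mem_coe, ← Submodule.smul_mem_iff _ hr, ← sub_eq_iff_eq_add'.mpr hderiv]
  exact sub_mem
    (Submodule.mem_sup_right (derivation_comp_segre_mem_segreTangentSpace D v))
    (Submodule.mem_sup_left (sum_mem fun y _ => Submodule.smul_mem _ _
      (Submodule.subset_span ⟨y, rfl⟩)))

theorem segre_mem_span_range_pointTangents [Finite ι] [Finite κ] [Nonempty (Fin q)]
    (hli : LinearIndependent K (spanningFamily u x))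
    (hcard : Nat.card ((ι × Option (DirectionIdx a)) ⊕ κ) + (1 + ∑ j, a j) ≤ ∏ j, (a j + 1))
    {v : FactorTuple a K}
    (hv : segre a K v ∈ Submodule.span K (Set.range (spanningFamily u x))) :
    segre a K v ∈ Submodule.span K (Set.range (pointTangents u x)) := by
  cases nonempty_fintype ι
  cases nonempty_fintype κ
  obtain ⟨g, hg⟩ := (Submodule.mem_span_range_iff_exists_fun K).mp hv
  suffices hzero : ∀ r, g (.inr r) = 0 by
    rw [← hg, Fintype.sum_sum_type]
    simp only [hzero, zero_smul, Finset.sum_const_zero, add_zero]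
    exact sum_mem fun y _ => Submodule.smul_mem _ _ (Submodule.subset_span ⟨y, rfl⟩)
  intro r
  by_contra hr
  set L := Submodule.span K (Set.range (spanningFamily u x))
  have hv0 : segre a K v ≠ 0 := fun h =>
    hr (Fintype.linearIndependent_iff.mp hli g (hg.trans h) _)
  have hinf : 0 < Module.finrank K ↥(L ⊓ segreTangentSpace v) :=
    Submodule.one_le_finrank_iff.mpr <|
      Submodule.ne_bot_iff _ |>.mpr ⟨_, ⟨hv, segre_mem_segreTangentSpace v⟩, hv0⟩
  have hrankL : Module.finrank K L = Nat.card ((ι × Option (DirectionIdx a)) ⊕ κ) := by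
    rw [Nat.card_eq_fintype_card]
    exact finrank_span_eq_card hli
  have hrankT := finrank_segreTangentSpace_le (segre_ne_zero_iff.mp hv0)
  have hsup := Submodule.finrank_sup_add_finrank_inf_eq L (segreTangentSpace v)
  rw [span_sup_segreTangentSpace_eq_top hx hg hr, finrank_top, Module.finrank_pi,
    Fintype.card_pi] at hsup
  simp only [Fintype.card_fin] at hsup
  omega

end GenericSpace

section Uniqueness

variable {q : ℕ} {a : Fin q → ℕ} {ι κ k K : Type*} [Field k] [Field K] [Algebra k K]

theorem IsNondegenerateAt.one_lt_sum [Nonempty (DirectionIdx a)] {p : ι → FactorTuple a K}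
    {u : ι → FactorDirections a K} {i : ι} (h : IsNondegenerateAt p u i) : 1 < ∑ j, a j := by
  by_contra! hle
  have : Subsingleton (DirectionIdx a) := by
    rw [← Finite.card_le_one_iff_subsingleton]
    simpa using hle
  obtain ⟨b⟩ := ‹Nonempty (DirectionIdx a)›
  have hsecond (b c : DirectionIdx a) : segreSecond (p i) (u i) b c = 0 :=
    if_pos congr(($(Subsingleton.elim b c)).1)
  exact one_ne_zero (congr_fun (h.eq_zero 1 fun c => by simp [hsecond]) b)

variable [CharZero k] [Fintype ι] {u : ι → FactorDirections a k} {x : CoordIdx ι κ a → K}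
  (hx : AlgebraicIndependent k x) {w : FactorTuple a K} {g : ι × Option (DirectionIdx a) → K}
  (hg : ∑ y, g y • pointTangents u x y = segre a K w)
include hx hg

-- Move only the factor `b.1` of the point `i`, with velocity the direction `b`.
theorem exists_derivation_comp_segre_eq (i : ι) (b : DirectionIdx a) :
    ∃ D : Derivation k K K, D ∘ segre a K w =
      ∑ y, D (g y) • pointTangents u x y + (g (i, none) • pointTangents u x (i, some b) +
        ∑ c, g (i, some c) • segreSecond (points x i)
          (fun j l m => algebraMap k K (u i j l m)) c b) := by
  classical
  let velocity : ι → FactorTuple a K :=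
    Pi.single i (Pi.single b.1 fun m => algebraMap k K (u i b.1 b.2 m))
  obtain ⟨D, hD⟩ := exists_derivation_apply_eq_of_algebraicIndependent hx
    (Sum.elim (fun s => velocity s.1 s.2.1 s.2.2) 0)
  have hpoints (i' : ι) (j : Fin q) : D ∘ points x i' j = velocity i' j :=
    funext fun m => hD (.inl (i', ⟨j, m⟩))
  have hb : D ∘ points x i b.1 = fun m => algebraMap k K (u i b.1 b.2 m) := by
    simp [hpoints, velocity]
  have hp : ∀ j ≠ b.1, D ∘ points x i j = 0 := fun j hj => by simp [hpoints, velocity, hj]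
  refine ⟨D, ?_⟩
  rw [← hg, derivation_comp_sum_smul, Fintype.sum_prod_type (f := fun y => g y • _),
    Fintype.sum_eq_single i, Fintype.sum_option]
  · refine congrArg _ (congrArg₂ _ (congrArg _ ?_) (Finset.sum_congr rfl fun c _ => congrArg _ ?_))
    · exact derivation_comp_segreTangent_none (u := fun j l m => algebraMap k K (u i j l m)) hb hp
    · exact derivation_comp_segreTangent_some hb hp
        (fun _ _ => funext fun _ => D.map_algebraMap _) c
  · refine fun i' hi' => Finset.sum_eq_zero fun o _ => ?_
    rw [derivation_comp_pointTangents_eq_zero (D := D) (fun j => ?_) u o, smul_zero]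
    simp [hpoints, velocity, hi']

theorem coeff_some_eq_zero {i : ι}
    (h : IsNondegenerateAt (points x) (fun i j l m => algebraMap k K (u i j l m)) i)
    (hw : segreTangentSpace w ≤ Submodule.span K (Set.range (pointTangents u x)))
    (c : DirectionIdx a) : g (i, some c) = 0 := by
  refine congr_fun (h.eq_zero (fun c => g (i, some c)) fun b => ?_) c
  obtain ⟨D, hD⟩ := exists_derivation_comp_segre_eq hx hg i b
  rw [← add_assoc] at hD
  rw [← sub_eq_iff_eq_add'.mpr hD]
  have hmem (y) : pointTangents u x y ∈ Submodule.span K (Set.range (pointTangents u x)) :=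
    Submodule.subset_span ⟨y, rfl⟩
  exact sub_mem (hw (derivation_comp_segre_mem_segreTangentSpace D w)) <|
    add_mem (sum_mem fun y _ => Submodule.smul_mem _ _ (hmem y)) (Submodule.smul_mem _ _ (hmem _))

theorem pointTangents_some_mem (hsome : ∀ i c, g (i, some c) = 0) {i : ι} (hi : g (i, none) ≠ 0)
    (b : DirectionIdx a) : pointTangents u x (i, some b) ∈
      Submodule.span K (Set.range fun i => segre a K (points x i)) ⊔ segreTangentSpace w := by
  obtain ⟨D, hD⟩ := exists_derivation_comp_segre_eq hx hg i b
  simp only [hsome, zero_smul, Finset.sum_const_zero, add_zero, Fintype.sum_prod_type,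
    Fintype.sum_option, map_zero] at hD
  rw [← Submodule.smul_mem_iff _ hi, ← sub_eq_iff_eq_add'.mpr hD]
  exact sub_mem
    (Submodule.mem_sup_right (derivation_comp_segre_mem_segreTangentSpace D w))
    (Submodule.mem_sup_left (sum_mem fun i _ => Submodule.smul_mem _ _
      (Submodule.subset_span ⟨i, rfl⟩)))

theorem eq_of_coeff_none_ne_zero [Nonempty (Fin q)] (hli : LinearIndependent K (pointTangents u x))
    (ha : 1 < ∑ j, a j) (hw : ∀ j, w j ≠ 0) (hsome : ∀ i c, g (i, some c) = 0) {i i' : ι}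
    (hi : g (i, none) ≠ 0) (hi' : g (i', none) ≠ 0) : i = i' := by
  classical
  by_contra hne
  let φ : ι ⊕ (Bool × DirectionIdx a) → ι × Option (DirectionIdx a) :=
    Sum.elim (fun l => (l, none)) fun y => (cond y.1 i i', some y.2)
  have hφ : Function.Injective φ := by
    rintro (l | ⟨_ | _, c⟩) (l' | ⟨_ | _, c'⟩) h <;> simp_all [φ, eq_comm]
  let M := Submodule.span K (Set.range fun i => segre a K (points x i))
  have hspan : Submodule.span K (Set.range (pointTangents u x ∘ φ)) ≤ M ⊔ segreTangentSpace w := by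
    rw [Submodule.span_le]
    rintro _ ⟨l | ⟨_ | _, c⟩, rfl⟩
    · exact Submodule.mem_sup_left (Submodule.subset_span ⟨l, rfl⟩)
    · exact pointTangents_some_mem hx hg hsome hi' c
    · exact pointTangents_some_mem hx hg hsome hi c
  have hrank := calc
    Fintype.card ι + 2 * ∑ j, a j
      = Module.finrank K (Submodule.span K (Set.range (pointTangents u x ∘ φ))) := by
        rw [finrank_span_eq_card (hli.comp φ hφ)]
        simp
    _ ≤ Module.finrank K ↥(M ⊔ segreTangentSpace w) := Submodule.finrank_mono hspan
    _ ≤ Module.finrank K M + Module.finrank K (segreTangentSpace w) :=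
        Submodule.finrank_add_le_finrank_add_finrank _ _
    _ ≤ Fintype.card ι + (1 + ∑ j, a j) :=
        add_le_add (finrank_range_le_card _) (finrank_segreTangentSpace_le hw)
  omega

omit [Fintype ι] hg in
theorem exists_segre_eq_smul [Finite ι] [Nonempty (DirectionIdx a)]
    (h : ∀ i, IsNondegenerateAt (points x) (fun i j l m => algebraMap k K (u i j l m)) i)
    (hw : ∀ j, w j ≠ 0)
    (hle : segreTangentSpace w ≤ Submodule.span K (Set.range (pointTangents u x))) :
    ∃ (i : ι) (t : K), segre a K w = t • segre a K (points x i) := by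
  have : Nonempty (Fin q) := .map Sigma.fst ‹Nonempty (DirectionIdx a)›
  cases nonempty_fintype ι
  obtain ⟨g, hg⟩ := (Submodule.mem_span_range_iff_exists_fun K).mp
    (hle (segre_mem_segreTangentSpace w))
  have hsome (i : ι) := coeff_some_eq_zero hx hg (h i) hle
  have hsegre : segre a K w = ∑ i, g (i, none) • segre a K (points x i) := by
    rw [← hg, Fintype.sum_prod_type]
    simp only [Fintype.sum_option, hsome, zero_smul, Finset.sum_const_zero, add_zero]
    rfl
  obtain ⟨i, hi⟩ : ∃ i, g (i, none) ≠ 0 := by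
    by_contra! hnone
    exact segre_ne_zero_iff.mpr hw (by simp [hsegre, hnone])
  refine ⟨i, g (i, none), ?_⟩
  rw [hsegre, Fintype.sum_eq_single i fun i' hi' => ?_]
  suffices g (i', none) = 0 by rw [this, zero_smul]
  by_contra hne
  exact hi' (eq_of_coeff_none_ne_zero hx hg (h i).linearIndependent (h i).one_lt_sum hw hsome
    hne hi)

end Uniqueness

section Generic

variable {q : ℕ} {a : Fin q → ℕ} {ι κ 𝕜 K B : Type*} [Field 𝕜] [Field K] [Algebra 𝕜 K]
  {u : ι → FactorDirections a 𝕜}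

/-- The linear space spanned by the tangent spaces at the points with coordinates `x` and by the
tensors with coordinates `x` is tangent to the Segre cone only along the lines through these
points. The tangent spaces enter through their spanning vectors in the directions `u`. -/
def IsTangentOnlyAtPoints (u : ι → FactorDirections a 𝕜) (x : CoordIdx ι κ a → K) : Prop :=
  ∀ w : FactorTuple a K, (∀ j, w j ≠ 0) →
    segreTangentSpace w ≤ Submodule.span K (Set.range (spanningFamily u x)) →
    ∃ (i : ι) (t : K), segre a K w = t • segre a K (points x i)

theorem isTangentOnlyAtPoints_of_algebraicIndependent [CharZero 𝕜] [Finite ι] [Finite κ]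
    [Nonempty (DirectionIdx a)] {x : CoordIdx ι κ a → K}
    (hx : AlgebraicIndependent 𝕜 x) (hli : LinearIndependent K (spanningFamily u x))
    (h : ∀ i, IsNondegenerateAt (points x) (fun i j l m => algebraMap 𝕜 K (u i j l m)) i)
    (hcard : Nat.card ((ι × Option (DirectionIdx a)) ⊕ κ) + (1 + ∑ j, a j) ≤ ∏ j, (a j + 1)) :
    IsTangentOnlyAtPoints u x :=
  have : Nonempty (Fin q) := .map Sigma.fst ‹Nonempty (DirectionIdx a)›
  fun _ hw hle => exists_segre_eq_smul hx h hw <| segreTangentSpace_le_iff.mpr fun j z =>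
    segre_mem_span_range_pointTangents hx hli hcard (segreTangentSpace_le_iff.mp hle j z)

theorem holdsGenerically_isNondegenerateAt_points [Nonempty (DirectionIdx a)] [Finite ι]
    {p : ι → FactorTuple a 𝕜} {i : ι} (h : IsNondegenerateAt p u i) :
    HoldsGenerically fun x : CoordIdx ι κ a → 𝕜 => IsNondegenerateAt (points x) u i := by
  have hgen := IsNondegenerateAt.holdsGenerically (σ := CoordIdx ι κ a) (i₀ := i)
    (p := points MvPolynomial.X) (u := fun i j l m => MvPolynomial.C (u i j l m))
    (x₀ := Sum.elim (fun s => p s.1 s.2.1 s.2.2) 0)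
  simp only [points, MvPolynomial.eval_X, MvPolynomial.eval_C] at hgen
  exact hgen h

theorem eval_spanningFamily (x : CoordIdx ι κ a → 𝕜) (y : (ι × Option (DirectionIdx a)) ⊕ κ)
    (f : BIdx q a) : MvPolynomial.eval x (spanningFamily u MvPolynomial.X y f) =
      spanningFamily u x y f := by
  have h := spanningFamily_map (MvPolynomial.aeval x) u MvPolynomial.X
  simp only [MvPolynomial.aeval_X] at h
  exact congr($h y f).symm

theorem holdsGenerically_linearIndependent_spanningFamily [Finite ι] [Finite κ]
    {p : ι → FactorTuple a 𝕜} (h : LinearIndependent 𝕜 (tangentFamily p u))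
    (hcard : Nat.card (ι × Option (DirectionIdx a)) + Nat.card κ ≤ ∏ j, (a j + 1)) :
    HoldsGenerically fun x : CoordIdx ι κ a → 𝕜 => LinearIndependent 𝕜 (spanningFamily u x) := by
  obtain ⟨c, -, hc⟩ := exists_linearIndependent_sumElim (κ := κ) h Submodule.span_univ
    (by simpa using hcard)
  have hgen := holdsGenerically_linearIndependent (spanningFamily u MvPolynomial.X)
    (Sum.elim (fun s => p s.1 s.2.1 s.2.2) fun s => c s.1 s.2)
  simp only [eval_spanningFamily] at hgen
  exact hgen hc

theorem linearIndependent_spanningFamily_generic [Finite ι] [Finite κ] (φ : (B → 𝕜) →ₐ[𝕜] K)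
    {x : CoordIdx ι κ a → B → 𝕜}
    (h : ∀ b, LinearIndependent 𝕜 (spanningFamily u fun s => x s b)) :
    LinearIndependent K (spanningFamily u fun s => φ (x s)) := by
  rw [spanningFamily_map]
  refine linearIndependent_generic φ.toRingHom fun b => ?_
  exact spanningFamily_map (Pi.evalAlgHom 𝕜 (fun _ => 𝕜) b) u x ▸ h b

theorem segreTangentSpace_le_span_spanningFamily_generic [Finite ι] [Finite κ]
    (φ : (B → 𝕜) →ₐ[𝕜] K) {x : CoordIdx ι κ a → B → 𝕜} {w : FactorTuple a (B → 𝕜)}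
    (h : ∀ b, segreTangentSpace (fun j m => w j m b) ≤
      Submodule.span 𝕜 (Set.range (spanningFamily u fun s => x s b))) :
    segreTangentSpace (fun j m => φ (w j m)) ≤
      Submodule.span K (Set.range (spanningFamily u fun s => φ (x s))) := by
  refine iSup_le fun j => ?_
  rw [LinearMap.range_eq_map, ← (Pi.basisFun K _).span_eq, Submodule.map_span_le]
  rintro _ ⟨m, rfl⟩
  let z : Fin (a j + 1) → B → 𝕜 := Pi.single m 1
  have hz : Pi.basisFun K _ m = fun m' => φ (z m') := by
    ext m'
    obtain rfl | hm := eq_or_ne m' m <;> simp [z, *]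
  rw [hz, MultilinearMap.toLinearMap_apply, spanningFamily_map]
  have hupdate : segre a K (Function.update (fun j m => φ (w j m)) j fun m' => φ (z m')) =
      fun f => φ (segre a _ (Function.update w j z) f) :=
    congr(segre a K $(update_map φ.toRingHom w j z)).trans (segre_map φ.toRingHom _)
  rw [hupdate]
  refine mem_span_range_generic φ.toRingHom fun b => ?_
  have hb := segreTangentSpace_le_iff.mp (h b) j fun m' => z m' b
  let ev := Pi.evalAlgHom 𝕜 (fun _ : B => 𝕜) b
  have hev : segre a 𝕜 (Function.update (fun j m => w j m b) j fun m' => z m' b) =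
      fun f => segre a _ (Function.update w j z) f b :=
    congr(segre a 𝕜 $(update_map ev.toRingHom w j z)).trans (segre_map ev.toRingHom _)
  rw [hev] at hb
  exact spanningFamily_map ev u x ▸ hb

theorem linearIndependent_tangentFamily_of_forall {p : ι → FactorTuple a 𝕜}
    (h : ∀ i, IsNondegenerateAt p u i) : LinearIndependent 𝕜 (tangentFamily p u) := by
  cases isEmpty_or_nonempty ι
  · exact linearIndependent_empty_type
  · exact (h (Classical.arbitrary ι)).linearIndependent

omit [Algebra 𝕜 K] in
theorem linearIndependent_segre_generic {α : Type*} [Finite α] (φ : (B → 𝕜) →+* K)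
    {v : α → FactorTuple a (B → 𝕜)}
    (h : ∀ b, LinearIndependent 𝕜 fun i => segre a 𝕜 fun j m => v i j m b) :
    LinearIndependent K fun i => segre a K fun j m => φ (v i j m) := by
  simp only [segre_map φ]
  refine linearIndependent_generic φ fun b => ?_
  have hev (i : α) := segre_map (Pi.evalRingHom (fun _ : B => 𝕜) b) (v i)
  exact funext hev ▸ h b

theorem not_isTangentOnlyAtPoints_generic [Finite ι] [Finite κ]
    (φ : (B → 𝕜) →ₐ[𝕜] K) {x : CoordIdx ι κ a → B → 𝕜}
    (hli : ∀ b, LinearIndependent 𝕜 (spanningFamily u fun s => x s b))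
    (h : ∀ b, ¬ IsTangentOnlyAtPoints u fun s => x s b) :
    ¬ IsTangentOnlyAtPoints u fun s => φ (x s) := by
  simp only [IsTangentOnlyAtPoints, not_forall, not_exists] at h
  choose w hw hle hne using h
  let w' : FactorTuple a (B → 𝕜) := fun j m b => w b j m
  have hw' : segre a K (fun j m => φ (w' j m)) ≠ 0 :=
    (linearIndependent_segre_generic φ.toRingHom (v := fun _ : Unit => w') fun b =>
      .of_subsingleton () (segre_ne_zero_iff.mpr (hw b))).ne_zero ()
  intro hK
  obtain ⟨i, t, ht⟩ := hK (fun j m => φ (w' j m)) (segre_ne_zero_iff.mp hw')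
    (segreTangentSpace_le_span_spanningFamily_generic φ hle)
  have hpoint (b : B) : segre a 𝕜 (points (fun s => x s b) i) ≠ 0 :=
    (hli b).ne_zero (Sum.inl (i, none) : _ ⊕ κ)
  have hpair := linearIndependent_segre_generic φ.toRingHom (v := ![w', points x i]) fun b =>
    linearIndependent_fin2.mpr ⟨hpoint b, fun t ht => hne b i t ht.symm⟩
  exact (linearIndependent_fin2.mp hpair).2 t ht.symm

theorem holdsGenerically_isTangentOnlyAtPoints [CharZero 𝕜] [Finite ι] [Finite κ]
    [Nonempty (DirectionIdx a)]
    (hcard : Nat.card ((ι × Option (DirectionIdx a)) ⊕ κ) + (1 + ∑ j, a j) ≤ ∏ j, (a j + 1)) :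
    HoldsGenerically fun x : CoordIdx ι κ a → 𝕜 =>
      LinearIndependent 𝕜 (spanningFamily u x) ∧ (∀ i, IsNondegenerateAt (points x) u i) →
        IsTangentOnlyAtPoints u x := by
  by_contra hP
  obtain ⟨K, _, _, φ, hφ⟩ := exists_generic_counterexample hP
  refine not_isTangentOnlyAtPoints_generic φ (fun b => (Classical.not_imp.mp b.2).1.1)
    (fun b => (Classical.not_imp.mp b.2).2)
    (isTangentOnlyAtPoints_of_algebraicIndependent hφ ?_ (fun i => ?_) hcard)
  · exact linearIndependent_spanningFamily_generic φ fun b => (Classical.not_imp.mp b.2).1.1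
  · simp only [← φ.commutes]
    exact IsNondegenerateAt.generic φ.toRingHom fun b => (Classical.not_imp.mp b.2).1.2 i

end Generic

/-! ### Tensors and coordinates -/

section TensorCoords

variable {q : ℕ} {a : Fin q → ℕ}

/-- The coordinates of a tensor in the standard basis. -/
def tensorCoords (a : Fin q → ℕ) : Ten q a ≃ₗ[ℂ] (BIdx q a → ℂ) :=
  LinearEquiv.ofLinearMap (lift (segre a ℂ)) (Fintype.linearCombination ℂ (basisVec a))
    (LinearMap.pi_ext' fun f => LinearMap.ext_ring (by
      simp [basisVec, Fintype.linearCombination_apply_single, segre_single]))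
    (PiTensorProduct.ext (Module.Basis.ext_multilinear (fun _ => Pi.basisFun ℂ _)
      fun f => by
        simp [basisVec, Fintype.linearCombination_apply_single, segre_single]))

theorem tensorCoords_tprod (v : FactorTuple a ℂ) : tensorCoords a (tprod ℂ v) = segre a ℂ v :=
  lift.tprod v

theorem tensorCoords_fromCoords (c : BIdx q a → ℂ) : tensorCoords a (fromCoords a c) = c :=
  (tensorCoords a).apply_symm_apply c

theorem map_tangent_tensorCoords (v : FactorTuple a ℂ) :
    (tangent a v).map (tensorCoords a).toLinearMap = segreTangentSpace v := by
  refine le_antisymm ?_ (segreTangentSpace_le_iff.mpr fun j z => ?_)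
  · rw [tangent, Submodule.map_span_le]
    rintro _ ⟨j, z, rfl⟩
    exact tensorCoords_tprod (Function.update v j z) ▸ segre_update_mem_segreTangentSpace v j z
  · rw [← tensorCoords_tprod]
    exact Submodule.mem_map_of_mem (Submodule.subset_span ⟨j, z, rfl⟩)

variable {ι κ : Type*} {u : ι → FactorDirections a ℂ} {x : CoordIdx ι κ a → ℂ}

theorem map_iSup_tangent_sup_span [Nonempty (Fin q)]
    (hli : LinearIndependent ℂ (spanningFamily u x)) :
    ((⨆ i, tangent a (points x i)) ⊔
        Submodule.span ℂ (Set.range fun r => fromCoords a (tensors x r))).map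
      (tensorCoords a).toLinearMap = Submodule.span ℂ (Set.range (spanningFamily u x)) := by
  have hpoint (i : ι) : segreTangentSpace (points x i) =
      Submodule.span ℂ (Set.range (segreTangent (points x i) (u i))) :=
    segreTangentSpace_eq_span_of_linearIndependent <|
      hli.comp (fun o => Sum.inl (i, o)) (Sum.inl_injective.comp (Prod.mk_right_injective i))
  rw [Submodule.map_sup, Submodule.map_iSup, Submodule.map_span, ← Set.range_comp, spanningFamily,
    Set.Sum.elim_range, Submodule.span_union]
  congr 1
  · simp only [map_tangent_tensorCoords, hpoint, ← Submodule.span_iUnion]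
    congr 1
    ext y
    simp [pointTangents, tangentFamily]
  · congr 2
    exact funext fun r => tensorCoords_fromCoords (tensors x r)

end TensorCoords

section Main

variable {q : ℕ} {a : Fin q → ℕ} {k d : ℕ}

theorem tangentGeneral_of_holdsGenerically [Nonempty (Fin q)] {u : Fin k → FactorDirections a ℂ}
    (hk : k * (1 + ∑ j, a j) ≤ d)
    (h : HoldsGenerically fun x : CoordIdx (Fin k) (Fin (d - k * (1 + ∑ j, a j))) a → ℂ =>
      LinearIndependent ℂ (spanningFamily u x) ∧ IsTangentOnlyAtPoints u x) :
    TangentGeneral q a k d := by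
  obtain ⟨F, hF, h⟩ := h
  refine ⟨F, ?_, fun p c hpc => ?_⟩
  · obtain ⟨x, hx⟩ : ∃ x, MvPolynomial.eval x F ≠ 0 := by
      by_contra! hzero
      exact hF (MvPolynomial.funext fun x => by simpa using hzero x)
    refine ⟨points x, tensors x, ?_⟩
    have hparam :
        Sum.elim (fun s => points x s.1 s.2.1 s.2.2) (fun s => tensors x s.1 s.2) = x := by
      ext (s | s) <;> rfl
    rwa [evalWV, hparam]
  · obtain ⟨hli, htangent⟩ := h _ hpc
    have hmap := map_iSup_tangent_sup_span hli
    constructor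
    · rw [← LinearEquiv.finrank_map_eq (tensorCoords a)]
      refine congr(Module.finrank ℂ $hmap).trans ?_
      rw [finrank_span_eq_card hli]
      simp [hk, add_comm _ 1]
    · intro w hw hle
      obtain ⟨i, t, hit⟩ := htangent w hw <| by
        rw [← hmap, ← map_tangent_tensorCoords]
        exact Submodule.map_mono hle
      refine ⟨i, t, (tensorCoords a).injective ?_⟩
      rw [map_smul, tensorCoords_tprod, tensorCoords_tprod]
      exact hit

theorem tangentGeneral_of_hasNondegenerateConfiguration [Nonempty (DirectionIdx a)]
    (hconfig : HasNondegenerateConfiguration ℂ a k) (hk : k * (1 + ∑ j, a j) ≤ d)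
    (hd : d + (1 + ∑ j, a j) ≤ ∏ j, (a j + 1)) : TangentGeneral q a k d := by
  have : Nonempty (Fin q) := .map Sigma.fst ‹Nonempty (DirectionIdx a)›
  obtain ⟨p, u, h⟩ := hconfig
  have hcard : Nat.card (Fin k × Option (DirectionIdx a)) +
      Nat.card (Fin (d - k * (1 + ∑ j, a j))) = d := by
    simp [hk, add_comm _ 1]
  have hli := holdsGenerically_linearIndependent_spanningFamily
    (κ := Fin (d - k * (1 + ∑ j, a j))) (linearIndependent_tangentFamily_of_forall h) (by omega)
  have hgood := HoldsGenerically.forall_of_finite fun i =>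
    holdsGenerically_isNondegenerateAt_points (κ := Fin (d - k * (1 + ∑ j, a j))) (h i)
  have htangent := holdsGenerically_isTangentOnlyAtPoints (𝕜 := ℂ) (u := u)
    (κ := Fin (d - k * (1 + ∑ j, a j))) (by rwa [Nat.card_sum, hcard])
  exact tangentGeneral_of_holdsGenerically hk <|
    ((hli.and hgood).and htangent).mono fun x hx => ⟨hx.1.1, hx.2 hx.1⟩

theorem four_pow_sub_four_pow {n : ℕ} (hn : 3 ≤ n) : 4 ^ n - 4 ^ (n - 3) = 63 * 4 ^ (n - 3) := by
  obtain ⟨m, rfl⟩ := Nat.exists_eq_add_of_le' hn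
  rw [Nat.add_sub_cancel, pow_add]
  omega

theorem three_mul_add_one_le_four_pow {n : ℕ} (hn : 5 ≤ n) : 3 * n + 1 ≤ 4 ^ (n - 3) := by
  induction n, hn using Nat.le_induction with
  | base => norm_num
  | succ n hn ih =>
    rw [Nat.sub_add_comm (by omega), pow_succ]
    omega

theorem stmt_9_general {n k d : ℕ} (hn : 5 ≤ n) (hk : k * (3 * n + 1) ≤ 63 * 4 ^ (n - 3))
    (hkd : k * (3 * n + 1) ≤ d) (hd : d + (3 * n + 1) ≤ 4 ^ n) :
    TangentGeneral n (fun _ => 3) k d := by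
  obtain ⟨r, rfl⟩ := Nat.exists_eq_add_of_le' hn
  have : Nonempty (DirectionIdx fun _ : Fin (r + 5) => 3) := ⟨⟨0, 0⟩⟩
  have hdim : 1 + ∑ _j : Fin (r + 5), 3 = 3 * (r + 5) + 1 := by simp; ring
  refine tangentGeneral_of_hasNondegenerateConfiguration
    (hasNondegenerateConfiguration_three ℂ r hk) ?_ ?_
  · rwa [hdim]
  · rw [hdim]
    simpa using hd

end Main

/-- `n` copies of `ℙ³`, tangential generality:
(i) the case `n = 5`, with subspaces of dimension `1008` and `k ≤ 63`;
(ii) the case `n > 5`, with subspaces of dimension `4^n - 4^{n-3}`. -/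
theorem stmt_9 :
    (∀ k : ℕ, 0 < k → k ≤ 63 →
      TangentGeneral 5 (fun _ => 3) k 1008) ∧
    (∀ n k : ℕ, 5 < n → 0 < k →
      (k : ℚ) ≤ ((4 ^ n - 4 ^ (n - 3) : ℕ) : ℚ) / (3 * n + 1) →
      TangentGeneral n (fun _ => 3) k (4 ^ n - 4 ^ (n - 3))) := by
  refine ⟨fun k _ hk => stmt_9_general le_rfl (by omega) (by omega) (by norm_num),
    fun n k hn _ hk => ?_⟩
  have hkd : k * (3 * n + 1) ≤ 4 ^ n - 4 ^ (n - 3) := by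
    rw [le_div_iff₀ (by positivity)] at hk
    exact_mod_cast hk
  have hpow := four_pow_sub_four_pow (by omega : 3 ≤ n)
  have hcodim := three_mul_add_one_le_four_pow hn.le
  exact stmt_9_general hn.le (hpow ▸ hkd) hkd (by omega)
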